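/- Let 1 < p < ∞ and p* = p/(p−1). Under the standing assumptions on (T, d, μ): if mod_{p*} T < ∞, then (cap_p T)^{1/p} · (mod_{p*} T)^{1/p*} ≤ C, where the constant C depends only on the data of T (the constants C_μ, C_P, λ_P). If mod_{p*} T = ∞, then cap_p T = 0. -/

import Mathlib

open MeasureTheory Metric Set Filter Topology
open scoped ENNReal NNReal unitInterval

noncomputable section

namespace Duality

/-! ### Rectifiable curves, line integrals and upper gradients

A rectifiable path is encoded by its arclength-type parametrization: a `1`-Lipschitz
map defined on a compact interval `[a, b]`.  The line integral `∫_γ ρ ds` of a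
nonnegative Borel function is then the Lebesgue integral of `ρ ∘ γ` over `[a, b]`. -/

structure UPath (X : Type*) [PseudoMetricSpace X] where
  a : ℝ
  b : ℝ
  hab : a ≤ b
  toFun : ℝ → X
  lip : LipschitzOnWith 1 toFun (Set.Icc a b)

namespace UPath

variable {X : Type*} [PseudoMetricSpace X]

/-- starting point of the path -/
def start (γ : UPath X) : X := γ.toFun γ.a

/-- end point of the path -/
def finish (γ : UPath X) : X := γ.toFun γ.b

/-- The line integral `∫_γ ρ ds`. -/
def integral (γ : UPath X) (ρ : X → ℝ≥0∞) : ℝ≥0∞ :=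
  ∫⁻ t in Set.Icc γ.a γ.b, ρ (γ.toFun t)

/-- The image (trace) `|γ|` of the path. -/
def trace (γ : UPath X) : Set X := γ.toFun '' Set.Icc γ.a γ.b

/-- The length of the path. -/
def length (γ : UPath X) : ℝ≥0∞ := eVariationOn γ.toFun (Set.Icc γ.a γ.b)

/-- The path stays inside the set `W`. -/
def InSet (γ : UPath X) (W : Set X) : Prop := ∀ t ∈ Set.Icc γ.a γ.b, γ.toFun t ∈ W

/-- The reparametrization of a rectifiable path as a `Path` (continuous map from `[0,1]`). -/
def toPath (γ : UPath X) : Path γ.start γ.finish where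
  toFun := fun t => γ.toFun (γ.a + (t : ℝ) * (γ.b - γ.a))
  continuous_toFun := by
    have hmem : ∀ t : unitInterval, γ.a + (t : ℝ) * (γ.b - γ.a) ∈ Set.Icc γ.a γ.b := by
      intro t
      obtain ⟨ht0, ht1⟩ := t.2
      constructor
      · nlinarith [γ.hab]
      · nlinarith [γ.hab]
    exact γ.lip.continuousOn.comp_continuous (by continuity) hmem
  source' := by simp [start]
  target' := by simp [finish]

end UPath

/-- `ρ` is an upper gradient of `u`. -/
def IsUpperGradient {X : Type*} [PseudoMetricSpace X] {Y : Type*} [PseudoEMetricSpace Y]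
    (u : X → Y) (ρ : X → ℝ≥0∞) : Prop :=
  ∀ γ : UPath X, edist (u γ.start) (u γ.finish) ≤ γ.integral ρ

/-- The `p`-modulus of a family of (rectifiable) paths. -/
def pathMod {X : Type*} [PseudoMetricSpace X] [MeasurableSpace X]
    (μ : Measure X) (p : ℝ) (Γ : Set (UPath X)) : ℝ≥0∞ :=
  ⨅ (ρ : X → ℝ≥0∞) (_ : Measurable ρ ∧ ∀ γ ∈ Γ, 1 ≤ γ.integral ρ),
    ∫⁻ x, ρ x ^ p ∂μ

/-- `ρ` is a `p`-weak upper gradient of `u`: the upper gradient inequality may fail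
only on a path family of zero `p`-modulus. -/
def IsWeakUpperGradient {X : Type*} [PseudoMetricSpace X] [MeasurableSpace X]
    {Y : Type*} [PseudoEMetricSpace Y] (μ : Measure X) (p : ℝ)
    (u : X → Y) (ρ : X → ℝ≥0∞) : Prop :=
  pathMod μ p {γ : UPath X | ¬ edist (u γ.start) (u γ.finish) ≤ γ.integral ρ} = 0

/-- `ρ` is a `p`-weak upper gradient of `u` in the subset `U`. -/
def IsWeakUpperGradientOn {X : Type*} [PseudoMetricSpace X] [MeasurableSpace X]
    {Y : Type*} [PseudoEMetricSpace Y] (μ : Measure X) (p : ℝ) (U : Set X)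
    (u : X → Y) (ρ : X → ℝ≥0∞) : Prop :=
  pathMod (μ.restrict U) p
    {γ : UPath X | γ.InSet U ∧ ¬ edist (u γ.start) (u γ.finish) ≤ γ.integral ρ} = 0

/-- `ρ` is the minimal `p`-weak upper gradient of `u`: it is a `p`-integrable `p`-weak
upper gradient which is `μ`-a.e. dominated by every other one. -/
def IsMinimalWeakUpperGradient {X : Type*} [PseudoMetricSpace X] [MeasurableSpace X]
    {Y : Type*} [PseudoEMetricSpace Y] (μ : Measure X) (p : ℝ)
    (u : X → Y) (ρ : X → ℝ≥0∞) : Prop :=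
  Measurable ρ ∧ IsWeakUpperGradient μ p u ρ ∧ (∫⁻ x, ρ x ^ p ∂μ) < ⊤ ∧
    ∀ ρ' : X → ℝ≥0∞, Measurable ρ' → IsWeakUpperGradient μ p u ρ' →
      (∫⁻ x, ρ' x ^ p ∂μ) < ⊤ → ∀ᵐ x ∂μ, ρ x ≤ ρ' x

/-! ### Doubling measures, Poincaré inequalities, Ahlfors regularity -/

/-- `μ` is a doubling (Borel) measure with doubling constant `Cμ`:
`0 < μ(2B) ≤ Cμ · μ(B) < ∞` for every ball `B` of radius `r < diam T`. -/
def IsDoubling {X : Type*} [MetricSpace X] [MeasurableSpace X]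
    (μ : Measure X) (Cμ : ℝ≥0∞) : Prop :=
  ∀ (x : X) (r : ℝ), 0 < r → r < Metric.diam (Set.univ : Set X) →
    0 < μ (ball x (2 * r)) ∧ μ (ball x (2 * r)) ≤ Cμ * μ (ball x r) ∧
      Cμ * μ (ball x r) < ⊤

/-- `(X, d, μ)` supports a weak `1`-Poincaré inequality with constants `CP`, `lP`:
`⨍_B |u - u_B| dμ ≤ CP · diam B · ⨍_{lP·B} ρ dμ` for every locally integrable `u`
and every upper gradient `ρ` of `u`, and balls have positive finite measure. -/
def SupportsPoincare {X : Type*} [MetricSpace X] [MeasurableSpace X]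
    (μ : Measure X) (CP lP : ℝ) : Prop :=
  (∀ (x : X) (r : ℝ), 0 < r → 0 < μ (ball x r) ∧ μ (ball x r) < ⊤) ∧
  ∀ (u : X → ℝ) (ρ : X → ℝ≥0∞), LocallyIntegrable u μ → Measurable ρ →
    IsUpperGradient u ρ → ∀ (x : X) (r : ℝ), 0 < r →
      (∫⁻ y in ball x r, ENNReal.ofReal |u y - ⨍ z in ball x r, u z ∂μ| ∂μ) /
          μ (ball x r) ≤
        ENNReal.ofReal (CP * Metric.diam (ball x r)) *
          ((∫⁻ y in ball x (lP * r), ρ y ∂μ) / μ (ball x (lP * r)))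

/-- `μ` is Ahlfors `q`-regular with constants `0 < aA ≤ AA`. -/
def IsAhlforsRegular {X : Type*} [MetricSpace X] [MeasurableSpace X]
    (μ : Measure X) (q aA AA : ℝ) : Prop :=
  0 < aA ∧ aA ≤ AA ∧
    ∀ (x : X) (r : ℝ), 0 < r → r < Metric.diam (Set.univ : Set X) →
      ENNReal.ofReal (aA * r ^ q) ≤ μ (ball x r) ∧
        μ (ball x r) ≤ ENNReal.ofReal (AA * r ^ q)

/-! ### The circle `ℝ/ℤ`, loops and degree -/

lemma intCast_coe_eq_zero (k : ℤ) : ((k : ℝ) : UnitAddCircle) = 0 :=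
  (AddCircle.coe_eq_zero_iff _).mpr ⟨k, by simp⟩

/-- The standard loop of degree `k` in `ℝ/ℤ` based at `y`: `t ↦ y + [k t]`. -/
def stdLoop (k : ℤ) (y : UnitAddCircle) : Path y y where
  toFun := fun t => y + (((k : ℝ) * (t : ℝ) : ℝ) : UnitAddCircle)
  continuous_toFun := by
    refine continuous_const.add ?_
    exact (AddCircle.continuous_mk' 1).comp (by continuity)
  source' := by simp
  target' := by
    have h1 : ((1 : unitInterval) : ℝ) = 1 := rfl
    have h : (((k : ℝ) * ((1 : unitInterval) : ℝ) : ℝ) : UnitAddCircle) = 0 := by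
      rw [h1, mul_one]; exact intCast_coe_eq_zero k
    simp [h]

/-- Concatenation of `n` copies of a loop. -/
def loopPow {X : Type*} [TopologicalSpace X] {x : X} (γ : Path x x) : ℕ → Path x x
  | 0 => Path.refl x
  | n + 1 => (loopPow γ n).trans γ

/-- A loop `γ` based at `x` has degree 1 (relative to the chosen generator `α₀` based
at `x₀`) if it is loop-homotopic to a conjugate `η * α₀ * η⁻¹` of `α₀`. -/
def IsDegreeOneLoop {T : Type*} [TopologicalSpace T] (x₀ : T) (α₀ : Path x₀ x₀)
    {x : T} (γ : Path x x) : Prop :=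
  ∃ η : Path x x₀, Path.Homotopic γ (η.trans (α₀.trans η.symm))

/-- A map `f : T → ℝ/ℤ` has degree `k`: it pushes every degree-1 loop based at `x`
to a loop which is loop-homotopic to `[f x] + k·β`, `β (t) = [t]`. -/
def HasDegree {T : Type*} [TopologicalSpace T] (x₀ : T) (α₀ : Path x₀ x₀)
    (f : T → UnitAddCircle) (k : ℤ) : Prop :=
  ∃ hf : Continuous f, ∀ (x : T) (γ : Path x x), IsDegreeOneLoop x₀ α₀ γ →
    Path.Homotopic (γ.map hf) (stdLoop k (f x))

/-- The class of `α₀` generates `π₁(T, x₀) ≅ ℤ`. -/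
def IsGenerator {T : Type*} [TopologicalSpace T] (x₀ : T) (α₀ : Path x₀ x₀) : Prop :=
  Function.Bijective fun k : ℤ =>
    (FundamentalGroup.fromPath (X := TopCat.of T) ⟦α₀⟧ : FundamentalGroup (TopCat.of T) x₀) ^ k

/-- `T` is semilocally simply connected. -/
def SemilocallySimplyConnected (T : Type*) [TopologicalSpace T] : Prop :=
  ∀ x : T, ∃ U ∈ 𝓝 x, ∀ γ : Path x x, (∀ t, γ t ∈ U) → Path.Homotopic γ (Path.refl x)

/-- `f` is a Lipschitz map of degree 1. -/
def DegOneLip {T : Type*} [MetricSpace T] (x₀ : T) (α₀ : Path x₀ x₀)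
    (f : T → UnitAddCircle) : Prop :=
  (∃ L : ℝ≥0, LipschitzWith L f) ∧ HasDegree x₀ α₀ f 1

/-! ### Capacity and surface modulus -/

/-- The degree 1 `p`-capacity of `T`, defined through minimal `p`-weak upper gradients:
the infimum of `∫ ρ^p dμ` over `p`-weak upper gradients `ρ` of Lipschitz degree-1 maps. -/
def cap {T : Type*} [MetricSpace T] [MeasurableSpace T] (μ : Measure T) (p : ℝ)
    (x₀ : T) (α₀ : Path x₀ x₀) : ℝ≥0∞ :=
  ⨅ (f : T → UnitAddCircle) (_ : DegOneLip x₀ α₀ f) (ρ : T → ℝ≥0∞)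
    (_ : Measurable ρ ∧ IsWeakUpperGradient μ p f ρ),
      ∫⁻ x, ρ x ^ p ∂μ

/-- The pointwise Lipschitz constant `Lip f (x)`. -/
def pLip {T : Type*} [MetricSpace T] (f : T → UnitAddCircle) (x : T) : ℝ≥0∞ :=
  Filter.limsup
    (fun r : ℝ => ⨆ y ∈ ball x r, edist (f x) (f y) / ENNReal.ofReal r) (𝓝[>] (0 : ℝ))

/-- The degree 1 `p`-capacity of `T`, defined through pointwise Lipschitz constants. -/
def capLip {T : Type*} [MetricSpace T] [MeasurableSpace T] (μ : Measure T) (p : ℝ)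
    (x₀ : T) (α₀ : Path x₀ x₀) : ℝ≥0∞ :=
  ⨅ (f : T → UnitAddCircle) (_ : DegOneLip x₀ α₀ f), ∫⁻ x, pLip f x ^ p ∂μ

/-- The codimension 1 spherical Hausdorff measure, as a set function:
`H(A) = sup_{δ>0} inf { ∑ μ(B_i)/r_i }`, the infimum being over countable covers of `A`
by balls `B_i` of radii `r_i ≤ δ`. -/
def codimH {T : Type*} [MetricSpace T] [MeasurableSpace T] (μ : Measure T)
    (A : Set T) : ℝ≥0∞ :=
  ⨆ (δ : ℝ) (_ : 0 < δ),
    ⨅ (c : ℕ → T) (r : ℕ → ℝ) (_ : ∀ i, r i ≤ δ)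
      (_ : A ⊆ ⋃ i, ball (c i) (r i)),
        ∑' i, μ (ball (c i) (r i)) / ENNReal.ofReal (r i)

/-- The integral `∫_S g dH` of `g ≥ 0` over `S` against the codimension 1 Hausdorff
measure, via the layer-cake (Choquet) formula. -/
def choquetIntegral {T : Type*} [MetricSpace T] [MeasurableSpace T] (μ : Measure T)
    (S : Set T) (g : T → ℝ≥0∞) : ℝ≥0∞ :=
  ∫⁻ t in Set.Ioi (0 : ℝ), codimH μ {x | x ∈ S ∧ ENNReal.ofReal t < g x}

/-- The family `Γ*` of all level sets `φ⁻¹[0]` of finite codimension 1 Hausdorff measure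
of continuous degree-1 maps `φ : T → ℝ/ℤ`. -/
def Surfaces {T : Type*} [MetricSpace T] [MeasurableSpace T] (μ : Measure T)
    (x₀ : T) (α₀ : Path x₀ x₀) : Set (Set T) :=
  {S | ∃ φ : T → UnitAddCircle, HasDegree x₀ α₀ φ 1 ∧ S = φ ⁻¹' {0} ∧ codimH μ S < ⊤}

/-- The surface `q`-modulus of a family of surfaces, the surfaces being equipped with the
codimension 1 Hausdorff measure. -/
def surfModOf {T : Type*} [MetricSpace T] [MeasurableSpace T] (μ : Measure T) (q : ℝ)
    (𝒮 : Set (Set T)) : ℝ≥0∞ :=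
  ⨅ (ρ : T → ℝ≥0∞) (_ : Measurable ρ ∧ ∀ S ∈ 𝒮, 1 ≤ choquetIntegral μ S ρ),
    ∫⁻ x, ρ x ^ q ∂μ

/-- The surface modulus `mod_q T`. -/
def surfMod {T : Type*} [MetricSpace T] [MeasurableSpace T] (μ : Measure T) (q : ℝ)
    (x₀ : T) (α₀ : Path x₀ x₀) : ℝ≥0∞ :=
  surfModOf μ q (Surfaces μ x₀ α₀)

/-- The family `Γ*` with the `(q-1)`-dimensional Hausdorff measure instead. -/
def SurfacesH {T : Type*} [MetricSpace T] [MeasurableSpace T] [BorelSpace T] (q : ℝ)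
    (x₀ : T) (α₀ : Path x₀ x₀) : Set (Set T) :=
  {S | ∃ φ : T → UnitAddCircle, HasDegree x₀ α₀ φ 1 ∧ S = φ ⁻¹' {0} ∧ μH[q - 1] S < ⊤}

/-- The surface modulus `mod_q T` defined through the `(q-1)`-dimensional Hausdorff
measures `H^{q-1} ⌞ S`, `S ∈ Γ*`. -/
def surfModH {T : Type*} [MetricSpace T] [MeasurableSpace T] [BorelSpace T]
    (μ : Measure T) (q pstar : ℝ) (x₀ : T) (α₀ : Path x₀ x₀) : ℝ≥0∞ :=
  ⨅ (ρ : T → ℝ≥0∞)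
    (_ : Measurable ρ ∧ ∀ S ∈ SurfacesH (T := T) q x₀ α₀, 1 ≤ ∫⁻ x in S, ρ x ∂μH[q - 1]),
      ∫⁻ x, ρ x ^ pstar ∂μ

/-- The standing assumptions 2.1. -/
def Standing {T : Type*} [MetricSpace T] [MeasurableSpace T] (μ : Measure T)
    (Cμ : ℝ≥0∞) (CP lP : ℝ) (x₀ : T) (α₀ : Path x₀ x₀) : Prop :=
  IsDoubling μ Cμ ∧ SupportsPoincare μ CP lP ∧ SemilocallySimplyConnected T ∧
    IsGenerator x₀ α₀ ∧ ∃ f : T → UnitAddCircle, DegOneLip x₀ α₀ f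

/-! ### The universal cover -/

/-- `π` is a local isometry. -/
def IsLocalIsometry {X Y : Type*} [MetricSpace X] [MetricSpace Y] (π : X → Y) : Prop :=
  ∀ x : X, ∃ ε : ℝ, 0 < ε ∧
    ∀ y ∈ ball x ε, ∀ z ∈ ball x ε, dist (π y) (π z) = dist y z

/-- `(T̃, π)` is the universal cover of `T`, with `T̃` carrying the length metric pulled
back by `π` (so that `π` is a local isometry). -/
def CoverSetup {T Tt : Type*} [MetricSpace T] [MetricSpace Tt] (π : Tt → T) : Prop :=
  IsCoveringMap π ∧ Function.Surjective π ∧ IsLocalIsometry π ∧ SimplyConnectedSpace Tt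

/-- `τ` is the deck transformation of the cover `π` determined by
`τ (γ̃ 0) = γ̃ 1` for every lift `γ̃` of every degree-1 loop `γ`. -/
def IsDeck {T Tt : Type*} [MetricSpace T] [MetricSpace Tt] (π : Tt → T)
    (x₀ : T) (α₀ : Path x₀ x₀) (τ : Tt → Tt) : Prop :=
  Continuous τ ∧ (∀ x, π (τ x) = π x) ∧
    ∀ (x : T) (γ : Path x x), IsDegreeOneLoop x₀ α₀ γ →
      ∀ γt : C(unitInterval, Tt), (∀ t, π (γt t) = γ t) → τ (γt 0) = γt 1

/-- `μ̃` is the natural lift of `μ` to the cover: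
`μ̃ (A) = ∫ #(π⁻¹(x) ∩ A) dμ (x)`. -/
def IsLiftedMeasure {T Tt : Type*} [MetricSpace T] [MeasurableSpace T]
    [MetricSpace Tt] [MeasurableSpace Tt] (π : Tt → T) (μ : Measure T)
    (μt : Measure Tt) : Prop :=
  ∀ A : Set Tt, MeasurableSet A → μt A = ∫⁻ x, ((π ⁻¹' {x} ∩ A).encard : ℝ≥0∞) ∂μ

/-! ### Newtonian spaces -/

/-- The seminorm of `N^{1,p}(U)`. -/
def NSeminorm {X : Type*} [PseudoMetricSpace X] [MeasurableSpace X] (μ : Measure X)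
    (p : ℝ) (U : Set X) (f : X → ℝ) : ℝ≥0∞ :=
  (∫⁻ x in U, ENNReal.ofReal |f x| ^ p ∂μ) ^ (1 / p) +
    ⨅ (ρ : X → ℝ≥0∞) (_ : Measurable ρ ∧ IsWeakUpperGradientOn μ p U f ρ),
      (∫⁻ x in U, ρ x ^ p ∂μ) ^ (1 / p)

/-- `f ∈ N^{1,p}_loc`. -/
def MemNloc {X : Type*} [PseudoMetricSpace X] [MeasurableSpace X] (μ : Measure X)
    (p : ℝ) (f : X → ℝ) : Prop :=
  ∀ U : Set X, IsOpen U → IsCompact (closure U) →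
    (∫⁻ x in U, ENNReal.ofReal |f x| ^ p ∂μ) < ⊤ ∧
      ∃ ρ : X → ℝ≥0∞, Measurable ρ ∧ IsWeakUpperGradientOn μ p U f ρ ∧
        (∫⁻ x in U, ρ x ^ p ∂μ) < ⊤

/-- The collection `F`: nonnegative Borel functions `ρ` on `T` such that `ρ ∘ π` is a
`p`-weak upper gradient of some `f ∈ N^{1,p}_loc (T̃)` with `f ∘ τ - f = 1` a.e. -/
def MemF {T Tt : Type*} [MetricSpace T] [MeasurableSpace T] [MetricSpace Tt]
    [MeasurableSpace Tt] (π : Tt → T) (τ : Tt → Tt) (μt : Measure Tt) (p : ℝ)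
    (ρ : T → ℝ≥0∞) : Prop :=
  Measurable ρ ∧ ∃ f : Tt → ℝ, MemNloc μt p f ∧ (∀ᵐ x ∂μt, f (τ x) - f x = 1) ∧
    IsWeakUpperGradient μt p f (ρ ∘ π)

/-- The capacity `cap_p^F T`. -/
def capF {T Tt : Type*} [MetricSpace T] [MeasurableSpace T] [MetricSpace Tt]
    [MeasurableSpace Tt] (μ : Measure T) (π : Tt → T) (τ : Tt → Tt) (μt : Measure Tt)
    (p : ℝ) : ℝ≥0∞ :=
  ⨅ (ρ : T → ℝ≥0∞) (_ : MemF π τ μt p ρ), ∫⁻ x, ρ x ^ p ∂μ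

/-! ### Miscellaneous operators -/

/-- The restricted Hardy–Littlewood maximal operator `M_R`. -/
def restrMax {T : Type*} [MetricSpace T] [MeasurableSpace T] (μ : Measure T)
    (R : ℝ≥0∞) (g : T → ℝ≥0∞) (x : T) : ℝ≥0∞ :=
  ⨆ (s : ℝ) (_ : 0 < s ∧ ENNReal.ofReal s ≤ R),
    (∫⁻ y in ball x s, g y ∂μ) / μ (ball x s)

/-- The upper Lebesgue integral. -/
def upperLintegral {Y : Type*} [MeasurableSpace Y] (ν : Measure Y)
    (F : Y → ℝ≥0∞) : ℝ≥0∞ :=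
  ⨅ (G : Y → ℝ≥0∞) (_ : Measurable G ∧ ∀ y, F y ≤ G y), ∫⁻ y, G y ∂ν

/-! ### The sets `Ω` and the functions `ψ̃`, `ζ`, `ψ` of Section 4.3 -/

/-- The set of points reachable from `A` by a rectifiable path inside `W`. -/
def reach {T : Type*} [MetricSpace T] (A W : Set T) : Set T :=
  {x | ∃ γ : UPath T, γ.start ∈ A ∧ γ.finish = x ∧ γ.InSet W}

/-- `inf_γ ∫_γ ρ ds` over rectifiable paths connecting `A` to `x` inside `W`. -/
def pathDist {T : Type*} [MetricSpace T] (ρ : T → ℝ≥0∞) (A W : Set T) (x : T) : ℝ≥0∞ :=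
  ⨅ (γ : UPath T) (_ : γ.start ∈ A ∧ γ.finish = x ∧ γ.InSet W), γ.integral ρ

open scoped Classical in
/-- The function `ψ̃`. -/
def psiTilde {T : Type*} [MetricSpace T] (ρ : T → ℝ≥0∞) (A W : Set T) (x : T) : ℝ :=
  if x ∈ reach A W then (pathDist ρ A W x).toReal else 0

/-- The function `min {1, ψ̃}`. -/
def zeta {T : Type*} [MetricSpace T] (ρ : T → ℝ≥0∞) (A W : Set T) (x : T) : ℝ :=
  min 1 (psiTilde ρ A W x)

/-- The competing admissible map `ψ = [min {1, ψ̃}] : T → ℝ/ℤ`. -/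
def psiMap {T : Type*} [MetricSpace T] (ρ : T → ℝ≥0∞) (A W : Set T) (x : T) :
    UnitAddCircle :=
  ((zeta ρ A W x : ℝ) : UnitAddCircle)

end Duality

namespace Duality

/-- Pointwise combination of two paths by a continuous binary operation. -/
lemma Path.Homotopic.map₂ {X Y Z : Type*} [TopologicalSpace X] [TopologicalSpace Y]
    [TopologicalSpace Z] {x x' : X} {y y' : Y} {p p' : Path x x'} {q q' : Path y y'}
    (hp : p.Homotopic p') (hq : q.Homotopic q') {F : X × Y → Z} (hF : Continuous F) :
    ((p.prod q).map hF).Homotopic ((p'.prod q').map hF) := by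
  obtain ⟨P⟩ := hp
  obtain ⟨Q⟩ := hq
  exact ⟨(Path.Homotopic.prodHomotopy P Q).map ⟨F, hF⟩⟩

lemma HasDegree.add_coe {T : Type*} [TopologicalSpace T] {x₀ : T} {α₀ : Path x₀ x₀}
    {f : T → UnitAddCircle} {k : ℤ} (hf : HasDegree x₀ α₀ f k) {v : T → ℝ} (hv : Continuous v) :
    HasDegree x₀ α₀ (fun x => f x + (v x : UnitAddCircle)) k := by
  obtain ⟨hfc, h⟩ := hf
  have hF : Continuous fun q : UnitAddCircle × ℝ => q.1 + (q.2 : UnitAddCircle) :=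
    continuous_fst.add ((AddCircle.continuous_mk' 1).comp continuous_snd)
  refine ⟨hF.comp (hfc.prodMk hv), fun x γ hγ => ?_⟩
  have h1 := h x γ hγ
  have h2 : (γ.map hv).Homotopic (Path.refl (v x)) := SimplyConnectedSpace.paths_homotopic _ _
  have := Path.Homotopic.map₂ h1 h2 hF
  have e : stdLoop k (f x + (v x : UnitAddCircle)) =
      ((stdLoop k (f x)).prod (Path.refl (v x))).map hF := by
    ext t
    simp [stdLoop, add_right_comm]
  rw [e]
  exact this

lemma exists_lift_sub {T : Type*} [TopologicalSpace T] [PathConnectedSpace T]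
    [LocallyPathConnectedSpace T] {x₀ : T} {α₀ : Path x₀ x₀} (hα : IsGenerator x₀ α₀)
    {φ f : T → UnitAddCircle} {k : ℤ} (hφ : HasDegree x₀ α₀ φ k) (hf : HasDegree x₀ α₀ f k) :
    ∃ w : T → ℝ, Continuous w ∧ ∀ x, (w x : UnitAddCircle) = φ x - f x := by
  obtain ⟨hφc, hφ⟩ := hφ
  obtain ⟨hfc, hf⟩ := hf
  have hα₀ : IsDegreeOneLoop x₀ α₀ α₀ := by
    refine ⟨Path.refl x₀, ?_⟩
    exact ⟨((Path.Homotopy.reflTrans _).trans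
      (by simpa using Path.Homotopy.transRefl α₀)).symm⟩
  let g : C(T, UnitAddCircle) := ⟨fun x => φ x - f x, hφc.sub hfc⟩
  have hg : (α₀.map g.continuous).Homotopic (Path.refl (g x₀)) := by
    have := Path.Homotopic.map₂ (hφ x₀ α₀ hα₀) (hf x₀ α₀ hα₀)
      (F := fun q : UnitAddCircle × UnitAddCircle => q.1 - q.2) (by fun_prop)
    have e : Path.refl (g x₀) = ((stdLoop k (φ x₀)).prod (stdLoop k (f x₀))).map
        (f := fun q : UnitAddCircle × UnitAddCircle => q.1 - q.2) (by fun_prop) := by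
      ext t
      simp [stdLoop, g]
    rw [e]
    exact this
  obtain ⟨e₀, he⟩ := QuotientAddGroup.mk_surjective (g x₀)
  have he' : ((e₀ : ℝ) : UnitAddCircle) = g x₀ := he
  have hone : FundamentalGroup.map g x₀ (FundamentalGroup.fromPath ⟦α₀⟧) = 1 := by
    rw [FundamentalGroup.map_apply]
    exact congrArg FundamentalGroup.fromPath (Quotient.sound hg)
  obtain ⟨w, ⟨-, hw⟩, -⟩ :=
    (AddCircle.isCoveringMap_coe (1 : ℝ)).existsUnique_continuousMap_lifts_of_range_le
      (f := g) he' (by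
        rintro _ ⟨a, rfl⟩
        obtain ⟨n, hn⟩ := hα.2 a
        have : FundamentalGroup.map g x₀ a = 1 := by
          rw [← hn]
          exact (map_zpow (FundamentalGroup.map g x₀) _ n).trans (by
            erw [hone]; exact one_zpow n)
        rw [this]
        exact one_mem _)
  exact ⟨w, w.continuous, fun x => congrFun hw x⟩

/-- A function satisfying a local Lipschitz estimate with variable constant `A` has `A` as an
upper gradient. -/
lemma isUpperGradient_of_local {X Y : Type*} [MetricSpace X] [PseudoEMetricSpace Y] {u : X → Y}
    {A : X → ℝ≥0∞} {ε : ℝ} (hε : 0 < ε)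
    (h : ∀ x x', dist x x' < ε → edist (u x) (u x') ≤ A x * edist x x') :
    IsUpperGradient u A := by
  intro γ
  have hlip : ∀ s ∈ Icc γ.a γ.b, ∀ t ∈ Icc γ.a γ.b,
      dist (γ.toFun s) (γ.toFun t) ≤ |s - t| := by
    intro s hs t ht
    simpa [Real.dist_eq] using γ.lip.dist_le_mul s hs t ht
  have piece : ∀ s ∈ Icc γ.a γ.b, ∀ t ∈ Icc γ.a γ.b, s ≤ t → t - s < ε →
      edist (u (γ.toFun s)) (u (γ.toFun t)) ≤ ∫⁻ τ in Ioc s t, A (γ.toFun τ) := by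
    intro s hs t ht hst hlt
    rcases hst.eq_or_lt with rfl | hst
    · simp
    have key : ∀ τ ∈ Ioc s t, edist (u (γ.toFun s)) (u (γ.toFun t)) / ENNReal.ofReal (t - s) ≤
        A (γ.toFun τ) := by
      intro τ hτ
      have hτ' : τ ∈ Icc γ.a γ.b := ⟨hs.1.trans hτ.1.le, hτ.2.trans ht.2⟩
      have h1 := hlip τ hτ' s hs
      have h2 := hlip τ hτ' t ht
      rw [abs_of_nonneg (by linarith [hτ.1])] at h1
      rw [abs_of_nonpos (by linarith [hτ.2])] at h2
      apply ENNReal.div_le_of_le_mul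
      calc edist (u (γ.toFun s)) (u (γ.toFun t))
          ≤ edist (u (γ.toFun τ)) (u (γ.toFun s)) + edist (u (γ.toFun τ)) (u (γ.toFun t)) :=
            edist_triangle_left _ _ _
        _ ≤ A (γ.toFun τ) * edist (γ.toFun τ) (γ.toFun s) +
            A (γ.toFun τ) * edist (γ.toFun τ) (γ.toFun t) :=
            add_le_add (h _ _ (by linarith [hτ.2])) (h _ _ (by linarith [hτ.1]))
        _ = A (γ.toFun τ) * (edist (γ.toFun τ) (γ.toFun s) + edist (γ.toFun τ) (γ.toFun t)) := by
            rw [mul_add]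
        _ ≤ A (γ.toFun τ) * ENNReal.ofReal (t - s) := by
            gcongr
            rw [edist_dist, edist_dist, ← ENNReal.ofReal_add dist_nonneg dist_nonneg]
            exact ENNReal.ofReal_le_ofReal (by linarith)
    calc edist (u (γ.toFun s)) (u (γ.toFun t))
        = edist (u (γ.toFun s)) (u (γ.toFun t)) / ENNReal.ofReal (t - s) *
          ENNReal.ofReal (t - s) := by
          rw [ENNReal.div_mul_cancel]
          · simpa using hst
          · simp
      _ = ∫⁻ τ in Ioc s t, edist (u (γ.toFun s)) (u (γ.toFun t)) / ENNReal.ofReal (t - s) := by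
          rw [setLIntegral_const, Real.volume_Ioc]
      _ ≤ _ := setLIntegral_mono' measurableSet_Ioc key
  obtain ⟨n, hn⟩ := exists_nat_gt ((γ.b - γ.a) / ε)
  have hn0 : (0 : ℝ) < n := lt_of_le_of_lt (div_nonneg (by linarith [γ.hab]) hε.le) hn
  set δ : ℝ := (γ.b - γ.a) / n with hδ
  have hδ0 : 0 ≤ δ := div_nonneg (by linarith [γ.hab]) hn0.le
  have hδε : δ < ε := by
    rw [hδ, div_lt_iff₀ hn0]
    rwa [div_lt_iff₀ hε, mul_comm] at hn
  have hnδ : (n : ℝ) * δ = γ.b - γ.a := by rw [hδ]; field_simp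
  have main : ∀ k : ℕ, k ≤ n → edist (u (γ.toFun γ.a)) (u (γ.toFun (γ.a + k * δ))) ≤
      ∫⁻ τ in Ioc γ.a (γ.a + k * δ), A (γ.toFun τ) := by
    intro k
    induction k with
    | zero => simp
    | succ k ih =>
      intro hk
      have hk' : ((k : ℝ) + 1) ≤ n := by exact_mod_cast hk
      have e1 : ((k + 1 : ℕ) : ℝ) * δ = k * δ + δ := by push_cast; ring
      have hle : (k : ℝ) * δ + δ ≤ γ.b - γ.a := by
        rw [← hnδ]; nlinarith
      have hk0 : 0 ≤ (k : ℝ) * δ := by positivity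
      have hun : Ioc γ.a (γ.a + (k + 1 : ℕ) * δ) =
          Ioc γ.a (γ.a + k * δ) ∪ Ioc (γ.a + k * δ) (γ.a + (k + 1 : ℕ) * δ) := by
        rw [Ioc_union_Ioc_eq_Ioc] <;> linarith
      rw [hun, lintegral_union measurableSet_Ioc (Ioc_disjoint_Ioc_of_le le_rfl)]
      refine (edist_triangle _ (u (γ.toFun (γ.a + k * δ))) _).trans
        (add_le_add (ih (by omega)) (piece _ ?_ _ ?_ ?_ ?_))
      · constructor <;> linarith
      · constructor <;> linarith
      · linarith
      · linarith
  have h1 := main n le_rfl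
  rw [hnδ, add_sub_cancel] at h1
  exact h1.trans (lintegral_mono_set Ioc_subset_Icc_self)

/-- Doubling and Poincaré inequality in a form without restriction on the radii. -/
structure DoublingPoincare {T : Type*} [MetricSpace T] [MeasurableSpace T] (μ : Measure T)
    (M C : ℝ) (k : ℕ) : Prop where
  one_le : 1 ≤ M
  nonneg : 0 ≤ C
  finite : IsFiniteMeasure μ
  pos : ∀ (x : T) (r : ℝ), 0 < r → 0 < μ.real (ball x r)
  doubling : ∀ (x : T) (r : ℝ), 0 < r → μ.real (ball x (2 * r)) ≤ M * μ.real (ball x r)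
  poincare : ∀ (u : T → ℝ) (ρ : T → ℝ≥0∞), Integrable u μ → Measurable ρ →
    IsUpperGradient u ρ → ∀ (x : T) (r : ℝ), 0 < r → ∃ c : ℝ,
      ∫⁻ y in ball x r, ENNReal.ofReal |u y - c| ∂μ ≤
        ENNReal.ofReal (C * r) * ∫⁻ y in ball x (2 ^ k * r), ρ y ∂μ

lemma measureReal_ball_two_pow_mul_le {T : Type*} [MetricSpace T] [MeasurableSpace T]
    {μ : Measure T} {M : ℝ} (hM : 1 ≤ M)
    (h : ∀ (x : T) (r : ℝ), 0 < r → μ.real (ball x (2 * r)) ≤ M * μ.real (ball x r))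
    (n : ℕ) (x : T) {r : ℝ} (hr : 0 < r) :
    μ.real (ball x (2 ^ n * r)) ≤ M ^ n * μ.real (ball x r) := by
  induction n with
  | zero => simp
  | succ n ih =>
    have := h x (2 ^ n * r) (by positivity)
    calc μ.real (ball x (2 ^ (n + 1) * r)) = μ.real (ball x (2 * (2 ^ n * r))) := by ring_nf
      _ ≤ M * μ.real (ball x (2 ^ n * r)) := this
      _ ≤ M * (M ^ n * μ.real (ball x r)) := by gcongr
      _ = _ := by ring

lemma DoublingPoincare.doubling_pow {T : Type*} [MetricSpace T] [MeasurableSpace T]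
    {μ : Measure T} {M C : ℝ} {k : ℕ} (h : DoublingPoincare μ M C k) (n : ℕ) (x : T) {r : ℝ}
    (hr : 0 < r) : μ.real (ball x (2 ^ n * r)) ≤ M ^ n * μ.real (ball x r) :=
  measureReal_ball_two_pow_mul_le h.one_le h.doubling n x hr

lemma diam_pos_of_isGenerator {T : Type*} [MetricSpace T] [CompactSpace T] {x₀ : T}
    {α₀ : Path x₀ x₀} (h : IsGenerator x₀ α₀) : 0 < diam (univ : Set T) := by
  by_contra hd
  have hd0 : diam (univ : Set T) = 0 := le_antisymm (not_lt.1 hd) diam_nonneg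
  have hsub : Subsingleton T := by
    refine ⟨fun x y => dist_le_zero.1 ?_⟩
    rw [← hd0]
    exact dist_le_diam_of_mem isCompact_univ.isBounded (mem_univ x) (mem_univ y)
  have hα : α₀ = Path.refl x₀ := by ext t; exact Subsingleton.elim _ _
  have h01 : (0 : ℤ) = 1 := h.1 (by
    subst hα
    simp only [zpow_zero, zpow_one]
    rfl)
  omega

lemma isFiniteMeasure_of_ball {T : Type*} [MetricSpace T] [CompactSpace T] [MeasurableSpace T]
    {μ : Measure T} (x₀ : T) (h : ∀ (x : T) (r : ℝ), 0 < r → μ (ball x r) < ⊤) :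
    IsFiniteMeasure μ := by
  refine ⟨?_⟩
  have : (univ : Set T) ⊆ ball x₀ (diam (univ : Set T) + 1) := fun y _ => by
    have := dist_le_diam_of_mem isCompact_univ.isBounded (mem_univ y) (mem_univ x₀)
    rw [mem_ball]; linarith
  exact (measure_mono this).trans_lt (h _ _ (by positivity))

lemma exists_doublingPoincare (Cμ : ℝ≥0∞) (CP lP : ℝ) :
    ∃ (M C : ℝ) (k : ℕ), ∀ (T : Type) [MetricSpace T] [MeasurableSpace T] [BorelSpace T]
      [CompactSpace T] (μ : Measure T) (x₀ : T) (α₀ : Path x₀ x₀),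
      Standing μ Cμ CP lP x₀ α₀ → DoublingPoincare μ M C k := by
  obtain ⟨k, hk1, hk2⟩ : ∃ k : ℕ, lP ≤ 2 ^ k ∧ (0 < lP → 1 ≤ 2 ^ k * lP) := by
    obtain ⟨a, ha⟩ := pow_unbounded_of_one_lt lP (one_lt_two)
    obtain ⟨b, hb⟩ := pow_unbounded_of_one_lt (1 / lP) (one_lt_two)
    have e1 : (2 : ℝ) ^ a ≤ 2 ^ (max a b) := pow_le_pow_right₀ one_le_two (le_max_left _ _)
    have e2 : (2 : ℝ) ^ b ≤ 2 ^ (max a b) := pow_le_pow_right₀ one_le_two (le_max_right _ _)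
    refine ⟨max a b, by linarith, fun h => ?_⟩
    rw [div_lt_iff₀ h] at hb
    nlinarith
  set M : ℝ := max 1 Cμ.toReal with hM
  have hM1 : 1 ≤ M := le_max_left _ _
  refine ⟨M, max CP 0 * 2 * M ^ k, k, ?_⟩
  intro T _ _ _ _ μ x₀ α₀ hS
  obtain ⟨hdbl, ⟨hball, hP⟩, -, hgen, -⟩ := hS
  have hD := diam_pos_of_isGenerator hgen
  have hfin : IsFiniteMeasure μ := isFiniteMeasure_of_ball x₀ fun x r hr => (hball x r hr).2
  set D := diam (univ : Set T) with hDdef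
  have hpos : ∀ (x : T) (r : ℝ), 0 < r → 0 < μ.real (ball x r) := fun x r hr =>
    ENNReal.toReal_pos (hball x r hr).1.ne' (measure_ne_top _ _)
  have hCtop : Cμ ≠ ⊤ := by
    rintro rfl
    have h1 := (hdbl x₀ (D / 2) (by linarith) (by linarith)).2.2
    rw [ENNReal.top_mul (hball _ _ (by linarith)).1.ne'] at h1
    exact lt_irrefl _ h1
  have hsmall : ∀ (x : T) (r : ℝ), 0 < r → r < D →
      μ.real (ball x (2 * r)) ≤ M * μ.real (ball x r) := by
    intro x r hr hrD
    have h1 := (hdbl x r hr hrD).2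
    have h2 := ENNReal.toReal_mono h1.2.ne h1.1
    rw [ENNReal.toReal_mul] at h2
    exact h2.trans (mul_le_mul_of_nonneg_right (le_max_right _ _) measureReal_nonneg)
  have hdoub : ∀ (x : T) (r : ℝ), 0 < r → μ.real (ball x (2 * r)) ≤ M * μ.real (ball x r) := by
    intro x r hr
    rcases lt_or_ge r D with h | h
    · exact hsmall x r hr h
    · have h1 := hsmall x (3 / 4 * D) (by linarith) (by linarith)
      calc μ.real (ball x (2 * r)) ≤ μ.real (ball x (2 * (3 / 4 * D))) := by
            refine measureReal_mono fun y _ => ?_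
            have := dist_le_diam_of_mem isCompact_univ.isBounded (mem_univ y) (mem_univ x)
            rw [mem_ball]
            linarith
        _ ≤ M * μ.real (ball x (3 / 4 * D)) := h1
        _ ≤ M * μ.real (ball x r) :=
            mul_le_mul_of_nonneg_left (measureReal_mono (ball_subset_ball (by linarith)))
              (by linarith)
  have hpow := fun n x r hr => measureReal_ball_two_pow_mul_le hM1 hdoub n x (r := r) hr
  refine ⟨hM1, by positivity, hfin, hpos, hdoub, ?_⟩
  intro u ρ hu hρ hug x r hr
  refine ⟨⨍ z in ball x r, u z ∂μ, ?_⟩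
  have h1 := hP u ρ hu.locallyIntegrable hρ hug x r hr
  have hb0 := (hball x r hr).1.ne'
  have hbt := (hball x r hr).2.ne
  rw [ENNReal.div_le_iff hb0 hbt] at h1
  refine h1.trans ?_
  rcases le_or_gt lP 0 with hl | hl
  · have : ball x (lP * r) = ∅ := ball_eq_empty.2 (mul_nonpos_of_nonpos_of_nonneg hl hr.le)
    simp [this]
  have hr' : 0 < lP * r := by positivity
  have hratio : μ (ball x r) ≤ ENNReal.ofReal (M ^ k) * μ (ball x (lP * r)) := by
    have h2 := hpow k x (lP * r) hr'
    have h3 : μ.real (ball x r) ≤ M ^ k * μ.real (ball x (lP * r)) :=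
      (measureReal_mono (ball_subset_ball (by nlinarith [hk2 hl]))).trans h2
    rw [← ENNReal.ofReal_toReal hbt, ← ENNReal.ofReal_toReal (measure_ne_top μ (ball x (lP * r))),
      ← ENNReal.ofReal_mul (by positivity)]
    exact ENNReal.ofReal_le_ofReal h3
  have hl0 := (hball x (lP * r) hr').1.ne'
  have hlt := (hball x (lP * r) hr').2.ne
  calc ENNReal.ofReal (CP * diam (ball x r)) *
        ((∫⁻ y in ball x (lP * r), ρ y ∂μ) / μ (ball x (lP * r))) * μ (ball x r)
      ≤ ENNReal.ofReal (max CP 0 * (2 * r)) *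
        ((∫⁻ y in ball x (lP * r), ρ y ∂μ) / μ (ball x (lP * r))) *
          (ENNReal.ofReal (M ^ k) * μ (ball x (lP * r))) := by
        gcongr
        · exact le_max_left _ _
        · exact diam_ball hr.le
    _ = ENNReal.ofReal (max CP 0 * (2 * r)) * ENNReal.ofReal (M ^ k) *
        ((∫⁻ y in ball x (lP * r), ρ y ∂μ) / μ (ball x (lP * r)) * μ (ball x (lP * r))) := by
        ring
    _ = ENNReal.ofReal (max CP 0 * 2 * M ^ k * r) * ∫⁻ y in ball x (lP * r), ρ y ∂μ := by
        rw [ENNReal.div_mul_cancel hl0 hlt, ← ENNReal.ofReal_mul (by positivity)]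
        ring_nf
    _ ≤ _ := by
        gcongr

lemma DoublingPoincare.abs_sub_le_of_ball_subset {T : Type*} [MetricSpace T] [MeasurableSpace T]
    [OpensMeasurableSpace T] {μ : Measure T} {M C : ℝ} {k n : ℕ} (h : DoublingPoincare μ M C k)
    {u : T → ℝ} {x z : T} {c r s e : ℝ} (hr : 0 < r) (hs : 0 < s)
    (hc : ∫⁻ y in ball x r, ENNReal.ofReal |u y - c| ∂μ ≤
      ENNReal.ofReal (C * r) * ∫⁻ _ in ball x (2 ^ k * r), 1 ∂μ)
    (hsub : ball z s ⊆ ball x r) (hsup : ball x (2 ^ k * r) ⊆ ball z (2 ^ n * s))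
    (hu : ∀ y ∈ ball z s, |u y - u z| ≤ e) : |u z - c| ≤ e + C * r * M ^ n := by
  have := h.finite
  have hC := h.nonneg
  have h1 : ENNReal.ofReal (|u z - c| - e) * μ (ball z s) ≤
      ENNReal.ofReal (C * r) * μ (ball x (2 ^ k * r)) := by
    calc ENNReal.ofReal (|u z - c| - e) * μ (ball z s)
        = ∫⁻ _ in ball z s, ENNReal.ofReal (|u z - c| - e) ∂μ := by simp
      _ ≤ ∫⁻ y in ball z s, ENNReal.ofReal |u y - c| ∂μ := by
          refine setLIntegral_mono' measurableSet_ball fun y hy => ?_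
          apply ENNReal.ofReal_le_ofReal
          have := abs_sub_abs_le_abs_sub (u z - c) (u y - c)
          have h2 := hu y hy
          rw [abs_sub_comm] at h2
          have h3 : u z - c - (u y - c) = u z - u y := by ring
          rw [h3] at this
          linarith
      _ ≤ ∫⁻ y in ball x r, ENNReal.ofReal |u y - c| ∂μ := lintegral_mono_set hsub
      _ ≤ _ := by simpa using hc
  by_contra! hlt
  have hpos := h.pos z s hs
  rw [← ofReal_measureReal, ← ofReal_measureReal, ← ENNReal.ofReal_mul (by
    have : 0 ≤ C * r * M ^ n := by have := h.one_le; positivity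
    linarith), ← ENNReal.ofReal_mul (by positivity), ENNReal.ofReal_le_ofReal_iff (by positivity)] at h1
  have h4 : μ.real (ball x (2 ^ k * r)) ≤ M ^ n * μ.real (ball z s) :=
    (measureReal_mono hsup).trans (h.doubling_pow n z hs)
  have h5 : C * r * μ.real (ball x (2 ^ k * r)) ≤ C * r * (M ^ n * μ.real (ball z s)) := by gcongr
  nlinarith

/-- A function which is `1`-Lipschitz at small scales is Lipschitz, with a constant depending only
on the doubling and Poincaré constants. -/
lemma DoublingPoincare.abs_sub_le_of_local {T : Type*} [MetricSpace T] [MeasurableSpace T]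
    [BorelSpace T] [CompactSpace T] {μ : Measure T} {M C : ℝ} {k : ℕ}
    (h : DoublingPoincare μ M C k) {u : T → ℝ} {ε : ℝ} (hε : 0 < ε)
    (hu : ∀ x y, dist x y < ε → |u x - u y| ≤ dist x y) (x y : T) :
    |u x - u y| ≤ 8 * C * M ^ (k + 4) * dist x y := by
  have := h.finite
  have hM := h.one_le
  have hC := h.nonneg
  have hcont : Continuous u := by
    rw [Metric.continuous_iff]
    intro b e he
    refine ⟨min ε e, lt_min hε he, fun a ha => ?_⟩
    rw [Real.dist_eq]
    exact (hu a b (ha.trans_le (min_le_left _ _))).trans_lt (ha.trans_le (min_le_right _ _))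
  have hint : Integrable u μ :=
    hcont.integrable_of_hasCompactSupport (HasCompactSupport.of_compactSpace u)
  have hug : IsUpperGradient u fun _ => 1 := by
    refine isUpperGradient_of_local hε fun a b hab => ?_
    rw [one_mul, edist_dist, edist_dist, Real.dist_eq]
    exact ENNReal.ofReal_le_ofReal (hu a b hab)
  have step : ∀ L : ℝ, 0 ≤ L → (∀ a b, |u a - u b| ≤ L * dist a b) →
      ∀ a b, |u a - u b| ≤ (L / 2 + 4 * C * M ^ (k + 4)) * dist a b := by
    intro L hL hLu a b
    rcases eq_or_ne a b with rfl | hab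
    · simp
    set d := dist a b with hd
    have hd0 : 0 < d := dist_pos.2 hab
    obtain ⟨c, hc⟩ := h.poincare u _ hint measurable_const hug a (2 * d) (by positivity)
    have key : ∀ z, dist z a ≤ d →
        |u z - c| ≤ L * (d / 4) + C * (2 * d) * M ^ (k + 4) := by
      intro z hz
      have e1 : (2 : ℝ) ^ (k + 4) * (d / 4) = 2 ^ k * (2 * d) + 2 ^ k * (2 * d) := by ring
      have e2 : d ≤ 2 ^ k * (2 * d) := by
        have : (1 : ℝ) ≤ 2 ^ k := one_le_pow₀ one_le_two
        nlinarith
      refine h.abs_sub_le_of_ball_subset (by positivity) (s := d / 4) (by positivity) hc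
        (ball_subset_ball' ?_) (ball_subset_ball' ?_) fun y hy => ?_
      · linarith
      · rw [dist_comm, e1]; linarith
      · exact (hLu y z).trans (by gcongr; exact (mem_ball.1 hy).le)
    have ka := key a (by simpa using hd0.le)
    have kb := key b (by rw [dist_comm])
    have := abs_sub_le (u a) c (u b)
    rw [abs_sub_comm c] at this
    linarith
  obtain ⟨W, hW⟩ := isCompact_univ.exists_bound_of_continuousOn hcont.continuousOn
  have hW0 : 0 ≤ W := (norm_nonneg _).trans (hW x (mem_univ x))
  set L₀ : ℝ := 1 + 2 * W / ε with hL₀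
  have hL₀0 : 0 ≤ L₀ := by positivity
  have base : ∀ a b, |u a - u b| ≤ L₀ * dist a b := by
    intro a b
    rcases lt_or_ge (dist a b) ε with hab | hab
    · have : 0 ≤ 2 * W / ε * dist a b := by positivity
      have := hu a b hab
      rw [hL₀]; linarith
    · have h1 := hW a (mem_univ a)
      have h2 := hW b (mem_univ b)
      rw [Real.norm_eq_abs] at h1 h2
      have h3 : 2 * W ≤ 2 * W / ε * dist a b := by
        rw [div_mul_eq_mul_div, le_div_iff₀ hε]; gcongr
      have := abs_sub (u a) (u b)
      have := @dist_nonneg _ _ a b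
      rw [hL₀]; linarith
  set K := 8 * C * M ^ (k + 4) with hK
  have hK0 : 0 ≤ K := by positivity
  have iter : ∀ n : ℕ, ∀ a b, |u a - u b| ≤ (L₀ / 2 ^ n + K) * dist a b := by
    intro n
    induction n with
    | zero => intro a b; exact (base a b).trans (by gcongr; simpa using hK0)
    | succ n ih =>
      intro a b
      refine (step _ (by positivity) ih a b).trans (le_of_eq ?_)
      rw [hK, pow_succ (2 : ℝ) n]; field_simp; ring
  have lim : Tendsto (fun n : ℕ => (L₀ / 2 ^ n + K) * dist x y) atTop (𝓝 ((0 + K) * dist x y)) := by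
    refine Tendsto.mul_const _ (Tendsto.add_const _ ?_)
    exact tendsto_const_nhds.div_atTop (tendsto_pow_atTop_atTop_of_one_lt one_lt_two)
  have := ge_of_tendsto' lim fun n => iter n x y
  simpa using this

/-- `x` and `y` are joined by a coarsely `1`-Lipschitz curve, with error `ε`, of length `ℓ`. -/
def CoarselyJoined {T : Type*} [MetricSpace T] (ε : ℝ) (x y : T) (ℓ : ℝ) : Prop :=
  0 ≤ ℓ ∧ ∃ g : ℝ → T, g 0 = x ∧ (∀ t, ℓ ≤ t → g t = y) ∧
    ∀ s t, dist (g s) (g t) ≤ |s - t| + ε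

lemma CoarselyJoined.refl {T : Type*} [MetricSpace T] {ε : ℝ} (hε : 0 ≤ ε) (x : T) :
    CoarselyJoined ε x x 0 :=
  ⟨le_rfl, fun _ => x, rfl, fun _ _ => rfl, fun s t => by
    have := abs_nonneg (s - t); simp; linarith⟩

lemma CoarselyJoined.mono {T : Type*} [MetricSpace T] {ε ℓ ℓ' : ℝ} {x y : T}
    (h : CoarselyJoined ε x y ℓ) (hℓ : ℓ ≤ ℓ') : CoarselyJoined ε x y ℓ' := by
  obtain ⟨h0, g, g0, g1, g2⟩ := h
  exact ⟨h0.trans hℓ, g, g0, fun t ht => g1 t (hℓ.trans ht), g2⟩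

lemma CoarselyJoined.step {T : Type*} [MetricSpace T] {ε ℓ : ℝ} {x y z : T}
    (h : CoarselyJoined ε x y ℓ) (hyz : dist y z ≤ ε) :
    CoarselyJoined ε x z (ℓ + dist y z) := by
  obtain ⟨h0, g, g0, g1, g2⟩ := h
  rcases eq_or_ne y z with rfl | hne
  · simpa using ⟨h0, g, g0, g1, g2⟩
  have hd : 0 < dist y z := dist_pos.2 hne
  have aux : ∀ s t, s < ℓ + dist y z → ℓ + dist y z ≤ t → dist (g s) z ≤ |s - t| + ε := by
    intro s t hs ht
    rw [abs_sub_comm, abs_of_nonneg (by linarith)]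
    rcases lt_or_ge s ℓ with h1 | h1
    · have h2 := g2 s ℓ
      rw [g1 ℓ le_rfl, abs_sub_comm, abs_of_nonneg (by linarith)] at h2
      have := dist_triangle (g s) y z
      linarith
    · rw [g1 s h1]; linarith
  refine ⟨by positivity, fun t => if t < ℓ + dist y z then g t else z, ?_, fun t ht => ?_,
    fun s t => ?_⟩
  · exact (if_pos (by linarith)).trans g0
  · exact if_neg (not_lt.2 ht)
  · beta_reduce
    split_ifs with h1 h2 h2
    · exact g2 s t
    · exact aux s t h1 (not_lt.1 h2)
    · rw [dist_comm, abs_sub_comm]; exact aux t s h2 (not_lt.1 h1)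
    · have : 0 ≤ ε := dist_nonneg.trans hyz
      simp; positivity

lemma DoublingPoincare.coarselyJoined {T : Type*} [MetricSpace T] [MeasurableSpace T]
    [BorelSpace T] [CompactSpace T] {μ : Measure T} {M C : ℝ} {k : ℕ}
    (h : DoublingPoincare μ M C k) {ε : ℝ} (hε : 0 < ε) (x y : T) :
    CoarselyJoined ε x y (8 * C * M ^ (k + 4) * dist x y + ε) := by
  classical
  set K := 8 * C * M ^ (k + 4) with hK
  let R : T → Set ℝ := fun y => {ℓ | CoarselyJoined ε x y ℓ}
  have hbdd : ∀ y, BddBelow (R y) := fun y => ⟨0, fun ℓ hℓ => hℓ.1⟩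
  have hR : ∀ a b, dist a b < ε → (R a).Nonempty → (R b).Nonempty ∧
      sInf (R b) ≤ sInf (R a) + dist a b := by
    intro a b hab ha
    refine ⟨ha.elim fun ℓ hℓ => ⟨_, CoarselyJoined.step hℓ hab.le⟩, ?_⟩
    rw [← sub_le_iff_le_add]
    refine le_csInf ha fun ℓ hℓ => ?_
    rw [sub_le_iff_le_add]
    exact csInf_le (hbdd b) (CoarselyJoined.step hℓ hab.le)
  let u : ℝ → T → ℝ := fun n y => if (R y).Nonempty then sInf (R y) else n
  have hu : ∀ n a b, dist a b < ε → |u n a - u n b| ≤ dist a b := by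
    intro n a b hab
    by_cases ha : (R a).Nonempty
    · obtain ⟨hb, h1⟩ := hR a b hab ha
      obtain ⟨-, h2⟩ := hR b a (by rwa [dist_comm]) hb
      rw [dist_comm] at h2
      simp only [u, ha, hb, if_true]
      rw [abs_sub_le_iff]; constructor <;> linarith
    · have hb : ¬ (R b).Nonempty := fun hb => ha (hR b a (by rwa [dist_comm]) hb).1
      simp [u, ha, hb]
  have hx : (R x).Nonempty := ⟨0, CoarselyJoined.refl hε.le x⟩
  have hux : ∀ n, u n x = 0 := by
    intro n
    simp only [u, hx, if_true]
    exact le_antisymm (csInf_le (hbdd x) (CoarselyJoined.refl hε.le x))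
      (le_csInf hx fun ℓ hℓ => hℓ.1)
  have key : ∀ n, |u n y| ≤ K * dist x y := fun n => by
    have := h.abs_sub_le_of_local hε (hu n) x y
    rwa [hux, zero_sub, abs_neg] at this
  by_cases hy : (R y).Nonempty
  · have := key 0
    simp only [u, hy, if_true] at this
    have h1 : sInf (R y) < K * dist x y + ε := by linarith [le_abs_self (sInf (R y))]
    obtain ⟨ℓ, hℓ, hlt⟩ := exists_lt_of_csInf_lt hy h1
    exact CoarselyJoined.mono hℓ hlt.le
  · have := key (K * dist x y + 1)
    simp only [u, hy, if_false] at this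
    linarith [le_abs_self (K * dist x y + 1)]

lemma joinedIn_ball_of_coarselyJoined {T : Type*} [MetricSpace T] [CompactSpace T] {x y : T}
    {ℓ r : ℝ} (h : ∀ ε > 0, CoarselyJoined ε x y ℓ) (hr : ℓ < r) : JoinedIn (ball x r) x y := by
  have hε : ∀ n : ℕ, (0 : ℝ) < 1 / (n + 1) := fun n => by positivity
  have h0 : 0 ≤ ℓ := (h 1 one_pos).1
  choose _ g g0 g1 g2 using fun n : ℕ => h _ (hε n)
  let U : Ultrafilter ℕ := hyperfilter ℕ
  have hex : ∀ t, ∃ z, Tendsto (fun n => g n t) U (𝓝 z) := fun t => by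
    obtain ⟨z, -, hz⟩ := isCompact_univ.ultrafilter_le_nhds (U.map fun n => g n t) (by simp)
    exact ⟨z, hz⟩
  choose G hG using hex
  have hU : (U : Filter ℕ) ≤ atTop := Nat.hyperfilter_le_atTop
  have hlip : ∀ s t, dist (G s) (G t) ≤ |s - t| := by
    intro s t
    have h1 : Tendsto (fun n => dist (g n s) (g n t)) U (𝓝 (dist (G s) (G t))) :=
      (hG s).dist (hG t)
    have h2 : Tendsto (fun n : ℕ => |s - t| + 1 / ((n : ℝ) + 1)) U (𝓝 (|s - t| + 0)) :=
      (tendsto_const_nhds.add tendsto_one_div_add_atTop_nhds_zero_nat).mono_left hU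
    simpa using le_of_tendsto_of_tendsto' h1 h2 fun n => g2 n s t
  have hG0 : G 0 = x := tendsto_nhds_unique (hG 0) (by simp [g0])
  have hG1 : G ℓ = y := tendsto_nhds_unique (hG ℓ) (by
    simp [fun n => g1 n ℓ le_rfl])
  have hGc : Continuous G := by
    refine LipschitzWith.continuous (K := 1) (LipschitzWith.of_dist_le_mul fun s t => ?_)
    simpa [Real.dist_eq] using hlip s t
  refine ⟨⟨⟨fun t => G (t * ℓ), hGc.comp (by fun_prop)⟩, by simp [hG0], by simp [hG1]⟩, fun t => ?_⟩
  change dist (G (t * ℓ)) x < r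
  have := hlip (t * ℓ) 0
  rw [hG0, sub_zero, abs_of_nonneg (mul_nonneg t.2.1 h0)] at this
  have h3 : (t : ℝ) * ℓ ≤ 1 * ℓ := by gcongr; exact t.2.2
  linarith

lemma DoublingPoincare.joinedIn_ball {T : Type*} [MetricSpace T] [MeasurableSpace T]
    [BorelSpace T] [CompactSpace T] {μ : Measure T} {M C : ℝ} {k : ℕ}
    (h : DoublingPoincare μ M C k) {x y : T} {r : ℝ} (hr : (8 * C * M ^ (k + 4) + 2) * dist x y < r) :
    JoinedIn (ball x r) x y := by
  rcases eq_or_ne x y with rfl | hxy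
  · exact JoinedIn.refl (by simpa using hr)
  have hd : 0 < dist x y := dist_pos.2 hxy
  refine joinedIn_ball_of_coarselyJoined (ℓ := 8 * C * M ^ (k + 4) * dist x y + dist x y)
    (fun ε hε => ?_) (by linarith)
  obtain ⟨a, g, g0, g1, g2⟩ := (h.coarselyJoined (lt_min hε hd) x y).mono
    (add_le_add_right (min_le_right ε _) _)
  exact ⟨a, g, g0, g1, fun s t => (g2 s t).trans (by gcongr; exact min_le_left _ _)⟩

lemma DoublingPoincare.pathConnectedSpace {T : Type*} [MetricSpace T] [MeasurableSpace T]
    [BorelSpace T] [CompactSpace T] [Nonempty T] {μ : Measure T} {M C : ℝ} {k : ℕ}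
    (h : DoublingPoincare μ M C k) : PathConnectedSpace T :=
  ⟨inferInstance, fun _ _ => (h.joinedIn_ball (lt_add_one _)).joined⟩

lemma DoublingPoincare.locallyPathConnectedSpace {T : Type*} [MetricSpace T] [MeasurableSpace T]
    [BorelSpace T] [CompactSpace T] {μ : Measure T} {M C : ℝ} {k : ℕ}
    (h : DoublingPoincare μ M C k) : LocallyPathConnectedSpace T := by
  rw [locallyPathConnectedSpace_iff_pathComponentIn_mem_nhds]
  intro x u hu hx
  obtain ⟨r, hr, hru⟩ := Metric.isOpen_iff.1 hu x hx
  have hK : 0 < 8 * C * M ^ (k + 4) + 2 := by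
    have := h.one_le; have := h.nonneg; positivity
  refine mem_of_superset (ball_mem_nhds x (div_pos hr hK)) fun y hy => ?_
  rw [mem_ball, lt_div_iff₀ hK, mul_comm, dist_comm] at hy
  exact (h.joinedIn_ball hy).mono hru

/-- A convex set of nonnegative vectors on which a weighted `ℓ^p`-norm is bounded below is
separated from the origin by a vector of controlled dual norm. -/
lemma exists_dual_weights {ι : Type*} [Fintype ι] {m : ι → ℝ} (hm : ∀ j, 0 < m j) {p κ : ℝ}
    (hp : 1 < p) (hκ : 0 < κ) {K : Set (ι → ℝ)} (hK : Convex ℝ K) (hK0 : ∀ a ∈ K, ∀ j, 0 ≤ a j)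
    (hle : ∀ a ∈ K, κ ≤ ∑ j, m j * a j ^ p) :
    ∃ b : ι → ℝ, (∀ j, 0 ≤ b j) ∧ (∀ a ∈ K, 1 ≤ ∑ j, m j * b j * a j) ∧
      ∑ j, m j * b j ^ (p / (p - 1)) ≤ κ ^ (1 - p / (p - 1)) := by
  have hp0 : 0 < p - 1 := by linarith
  have hq : 0 < p / (p - 1) := by positivity
  rcases K.eq_empty_or_nonempty with rfl | ⟨a₁, ha₁⟩
  · refine ⟨0, fun _ => le_rfl, by simp, ?_⟩
    simp only [Pi.zero_apply, Real.zero_rpow hq.ne', mul_zero, Finset.sum_const_zero]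
    positivity
  let F : (ι → ℝ) → ℝ := fun a => ∑ j, m j * a j ^ p
  have hF : Continuous F := by
    refine continuous_finsetSum _ fun j _ => continuous_const.mul ?_
    exact (continuous_apply j).rpow_const fun _ => Or.inr (by linarith)
  have hcl0 : ∀ a ∈ closure K, ∀ j, 0 ≤ a j := by
    intro a ha j
    have : closure K ⊆ {a | 0 ≤ a j} := closure_minimal (fun a ha => hK0 a ha j)
      (isClosed_le continuous_const (continuous_apply j))
    exact this ha
  have hclκ : ∀ a ∈ closure K, κ ≤ F a := by
    intro a ha
    have : closure K ⊆ {a | κ ≤ F a} := closure_minimal hle (isClosed_le continuous_const hF)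
    exact this ha
  have hcomp : IsCompact (closure K ∩ {a | F a ≤ F a₁}) := by
    refine IsCompact.of_isClosed_subset (isCompact_Icc (a := (0 : ι → ℝ))
      (b := fun j => (F a₁ / m j) ^ p⁻¹))
      (isClosed_closure.inter (isClosed_le hF continuous_const)) ?_
    rintro a ⟨ha, haF⟩
    refine ⟨hcl0 a ha, fun j => ?_⟩
    have h1 : m j * a j ^ p ≤ F a :=
      Finset.single_le_sum (f := fun j => m j * a j ^ p)
        (fun i _ => mul_nonneg (hm i).le (Real.rpow_nonneg (hcl0 a ha i) p)) (Finset.mem_univ j)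
    have h2 : a j ^ p ≤ F a₁ / m j := by
      rw [le_div_iff₀ (hm j), mul_comm]; exact h1.trans haF
    rw [← Real.rpow_rpow_inv (hcl0 a ha j) (show p ≠ 0 by linarith)]
    exact Real.rpow_le_rpow (Real.rpow_nonneg (hcl0 a ha j) p) h2 (by positivity)
  obtain ⟨a₀, ⟨ha₀, ha₀F⟩, hmin⟩ := hcomp.exists_isMinOn ⟨a₁, subset_closure ha₁, le_refl (F a₁)⟩
    hF.continuousOn
  have hmin' : IsMinOn F (closure K) a₀ := by
    intro a ha
    rcases le_total (F a) (F a₁) with h | h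
    · exact hmin ⟨ha, h⟩
    · exact le_trans ha₀F h
  set m₀ := F a₀ with hm₀
  have hm₀κ : κ ≤ m₀ := hclκ a₀ ha₀
  have hm₀0 : 0 < m₀ := hκ.trans_le hm₀κ
  have hnn := hcl0 a₀ ha₀
  have hder : HasFDerivAt F (∑ j, m j • ((p * a₀ j ^ (p - 1)) •
      (ContinuousLinearMap.proj j : (ι → ℝ) →L[ℝ] ℝ))) a₀ := by
    refine HasFDerivAt.fun_sum fun j _ => HasFDerivAt.const_mul ?_ _
    exact (Real.hasDerivAt_rpow_const (Or.inr hp.le)).comp_hasFDerivAt a₀ (hasFDerivAt_apply j a₀)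
  have hpow : ∀ j, a₀ j ^ (p - 1) * a₀ j = a₀ j ^ p := by
    intro j
    rcases (hnn j).eq_or_lt with h | h
    · rw [← h, mul_zero, Real.zero_rpow (by linarith)]
    · rw [← Real.rpow_add_one h.ne']; ring_nf
  refine ⟨fun j => a₀ j ^ (p - 1) / m₀, fun j => by have := hnn j; positivity, fun a ha => ?_, ?_⟩
  · have h1 := hmin'.localize.hasFDerivWithinAt_nonneg hder.hasFDerivWithinAt
      (sub_mem_posTangentConeAt_of_segment_subset
        (hK.closure.segment_subset ha₀ (subset_closure ha)))
    have h2 : (∑ j, m j • ((p * a₀ j ^ (p - 1)) •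
        (ContinuousLinearMap.proj j : (ι → ℝ) →L[ℝ] ℝ))) (a - a₀) =
        p * (∑ j, m j * a₀ j ^ (p - 1) * a j - m₀) := by
      simp only [hm₀, F, _root_.sum_apply, _root_.smul_apply,
        ContinuousLinearMap.proj_apply, Pi.sub_apply, smul_eq_mul, ← Finset.sum_sub_distrib,
        Finset.mul_sum, ← hpow]
      refine Finset.sum_congr rfl fun j _ => ?_
      ring
    rw [h2] at h1
    have h3 := nonneg_of_mul_nonneg_right h1 (by linarith)
    have h4 : ∑ j, m j * (a₀ j ^ (p - 1) / m₀) * a j = (∑ j, m j * a₀ j ^ (p - 1) * a j) / m₀ := by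
      rw [Finset.sum_div]; refine Finset.sum_congr rfl fun j _ => ?_; ring
    rw [h4, le_div_iff₀ hm₀0]
    linarith
  · have h1 : ∀ j, m j * (a₀ j ^ (p - 1) / m₀) ^ (p / (p - 1)) =
        m j * a₀ j ^ p * (m₀ ^ (p / (p - 1)))⁻¹ := by
      intro j
      rw [Real.div_rpow (Real.rpow_nonneg (hnn j) _) hm₀0.le, ← Real.rpow_mul (hnn j),
        mul_div_cancel₀ _ hp0.ne']
      ring
    simp only [h1, ← Finset.sum_mul]
    change m₀ * _ ≤ _
    rw [← Real.rpow_neg hm₀0.le]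
    nth_rewrite 1 [← Real.rpow_one m₀]
    rw [← Real.rpow_add hm₀0, ← sub_eq_add_neg]
    refine Real.rpow_le_rpow_of_nonpos hκ hm₀κ ?_
    have : 1 ≤ p / (p - 1) := by rw [le_div_iff₀ hp0]; linarith
    linarith

lemma codimH_mono {T : Type*} [MetricSpace T] [MeasurableSpace T] (μ : Measure T) {A B : Set T}
    (h : A ⊆ B) : codimH μ A ≤ codimH μ B :=
  iSup₂_mono fun _ _ => iInf_mono fun _ => iInf_mono fun _ => iInf_mono fun _ =>
    le_iInf fun hB => iInf_le_of_le (h.trans hB) le_rfl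

lemma exists_cover_of_codimH_lt {T : Type*} [MetricSpace T] [MeasurableSpace T] {μ : Measure T}
    {A : Set T} {b : ℝ≥0∞} (h : codimH μ A < b) {δ : ℝ} (hδ : 0 < δ) :
    ∃ (c : ℕ → T) (r : ℕ → ℝ), (∀ i, r i ≤ δ) ∧ A ⊆ ⋃ i, ball (c i) (r i) ∧
      ∑' i, μ (ball (c i) (r i)) / ENNReal.ofReal (r i) < b := by
  have h1 := (le_iSup₂ (f := fun (δ : ℝ) (_ : 0 < δ) =>
    ⨅ (c : ℕ → T) (r : ℕ → ℝ) (_ : ∀ i, r i ≤ δ) (_ : A ⊆ ⋃ i, ball (c i) (r i)),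
        ∑' i, μ (ball (c i) (r i)) / ENNReal.ofReal (r i)) δ hδ).trans_lt h
  simp only [iInf_lt_iff] at h1
  obtain ⟨c, r, hr, hA, hlt⟩ := h1
  exact ⟨c, r, hr, hA, hlt⟩

/-- `X ≤ ∑ᵢ μ(Bᵢ)/rᵢ · h(yᵢ)` for every finite cover of `S` by balls `Bᵢ` of radii at most `δ`,
and every choice of points `yᵢ ∈ S ∩ Bᵢ`. -/
def LeRiemannSums {T : Type*} [MetricSpace T] [MeasurableSpace T] (μ : Measure T) (S : Set T)
    (h : T → ℝ≥0∞) (X : ℝ≥0∞) (δ : ℝ) : Prop :=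
  ∀ (ι : Type) (s : Finset ι) (c : ι → T) (r : ι → ℝ) (y : ι → T), (∀ i ∈ s, r i ≤ δ) →
    S ⊆ ⋃ i ∈ s, ball (c i) (r i) → (∀ i ∈ s, y i ∈ S ∩ ball (c i) (r i)) →
      X ≤ ∑ i ∈ s, μ (ball (c i) (r i)) / ENNReal.ofReal (r i) * h (y i)

lemma LeRiemannSums.le_tsum {T : Type*} [MetricSpace T] [MeasurableSpace T] {μ : Measure T}
    {S : Set T} (hS : IsCompact S) (hH : codimH μ S < ⊤) {h : T → ℝ≥0∞} {X : ℝ≥0∞} {δ : ℝ}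
    (hδ : 0 < δ) (hX : LeRiemannSums μ S h X δ) {κ : Type} [Countable κ] {E : κ → Set T}
    (hE : S ⊆ ⋃ k, E k) {β : κ → ℝ≥0∞} (hβ : ∀ k, β k ≠ ⊤) (hle : ∀ k, ∀ x ∈ E k, h x ≤ β k) :
    X ≤ ∑' k, β k * codimH μ (S ∩ E k) := by
  refine ENNReal.le_of_forall_pos_le_add fun η hη _ => ?_
  obtain ⟨τ, hτ0, hτ⟩ := ENNReal.exists_pos_sum_of_countable' (ENNReal.coe_pos.2 hη).ne' κ
  have hfin : ∀ k, codimH μ (S ∩ E k) ≠ ⊤ := fun k =>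
    ((codimH_mono μ inter_subset_left).trans_lt hH).ne
  have hlt : ∀ k, codimH μ (S ∩ E k) < codimH μ (S ∩ E k) + τ k / (β k + 1) := fun k =>
    ENNReal.lt_add_right (hfin k) (ENNReal.div_pos (hτ0 k).ne'
      (ENNReal.add_ne_top.2 ⟨hβ k, ENNReal.one_ne_top⟩)).ne'
  choose c r hr hcov hsum using fun k => exists_cover_of_codimH_lt (hlt k) hδ
  let G : Type := {q : κ × ℕ // (S ∩ E q.1 ∩ ball (c q.1 q.2) (r q.1 q.2)).Nonempty}
  have hG : S ⊆ ⋃ q : G, ball (c q.1.1 q.1.2) (r q.1.1 q.1.2) := by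
    intro x hx
    obtain ⟨k, hk⟩ := mem_iUnion.1 (hE hx)
    obtain ⟨i, hi⟩ := mem_iUnion.1 (hcov k ⟨hx, hk⟩)
    exact mem_iUnion.2 ⟨⟨(k, i), x, ⟨hx, hk⟩, hi⟩, hi⟩
  obtain ⟨s, hs⟩ := hS.elim_finite_subcover _ (fun _ => isOpen_ball) hG
  choose y hy using fun q : G => q.2
  have h1 := hX G s (fun q => c q.1.1 q.1.2) (fun q => r q.1.1 q.1.2) y (fun q _ => hr _ _) hs
    fun q _ => ⟨(hy q).1.1, (hy q).2⟩
  have h2 : ∀ k, β k * ∑' i, μ (ball (c k i) (r k i)) / ENNReal.ofReal (r k i) ≤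
      β k * codimH μ (S ∩ E k) + τ k := by
    intro k
    calc _ ≤ β k * (codimH μ (S ∩ E k) + τ k / (β k + 1)) := by gcongr; exact (hsum k).le
      _ = β k * codimH μ (S ∩ E k) + τ k * (β k / (β k + 1)) := by
          rw [mul_add, ENNReal.div_eq_inv_mul, ENNReal.div_eq_inv_mul]; ring
      _ ≤ β k * codimH μ (S ∩ E k) + τ k * 1 := by
          gcongr
          exact ENNReal.div_le_of_le_mul (by rw [one_mul]; exact le_self_add)
      _ = _ := by rw [mul_one]
  calc X ≤ _ := h1
    _ ≤ ∑ q ∈ s, β q.1.1 * (μ (ball (c q.1.1 q.1.2) (r q.1.1 q.1.2)) /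
          ENNReal.ofReal (r q.1.1 q.1.2)) := by
        refine Finset.sum_le_sum fun q _ => ?_
        rw [mul_comm]
        gcongr
        exact hle _ _ (hy q).1.2
    _ ≤ ∑' q : G, β q.1.1 * (μ (ball (c q.1.1 q.1.2) (r q.1.1 q.1.2)) /
          ENNReal.ofReal (r q.1.1 q.1.2)) := ENNReal.sum_le_tsum s
    _ ≤ ∑' q : κ × ℕ, β q.1 * (μ (ball (c q.1 q.2) (r q.1 q.2)) /
          ENNReal.ofReal (r q.1 q.2)) :=
        ENNReal.tsum_comp_le_tsum_of_injective Subtype.val_injective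
          fun q : κ × ℕ => β q.1 * (μ (ball (c q.1 q.2) (r q.1 q.2)) / ENNReal.ofReal (r q.1 q.2))
    _ = ∑' k, β k * ∑' i, μ (ball (c k i) (r k i)) / ENNReal.ofReal (r k i) := by
        rw [ENNReal.tsum_prod']
        simp_rw [ENNReal.tsum_mul_left]
    _ ≤ ∑' k, (β k * codimH μ (S ∩ E k) + τ k) := ENNReal.tsum_le_tsum h2
    _ = ∑' k, β k * codimH μ (S ∩ E k) + ∑' k, τ k := ENNReal.tsum_add
    _ ≤ _ := by gcongr

/-- Dyadic decomposition: a lower bound for all Riemann sums bounds the Choquet integral. -/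
lemma LeRiemannSums.le_choquetIntegral {T : Type*} [MetricSpace T] [MeasurableSpace T]
    {μ : Measure T} {S : Set T} (hS : IsCompact S) (hH : codimH μ S < ⊤) {h : T → ℝ≥0∞}
    (hh : ∀ x, h x ≠ ⊤) {X : ℝ≥0∞} {δ : ℝ} (hδ : 0 < δ) (hX : LeRiemannSums μ S h X δ) :
    X ≤ 4 * choquetIntegral μ S h := by
  let E : Option ℤ → Set T := fun o => o.elim {x | h x = 0}
    fun k => {x | (2 : ℝ≥0∞) ^ k < h x ∧ h x ≤ 2 ^ (k + 1)}
  let β : Option ℤ → ℝ≥0∞ := fun o => o.elim 0 fun k => 2 ^ (k + 1)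
  have hE : S ⊆ ⋃ o, E o := by
    intro x _
    rcases eq_or_ne (h x) 0 with h0 | h0
    · exact mem_iUnion.2 ⟨none, h0⟩
    · obtain ⟨k, hk⟩ := ENNReal.exists_mem_Ioc_zpow h0 (hh x) ENNReal.one_lt_two (by simp)
      exact mem_iUnion.2 ⟨some k, hk⟩
  have hβ : ∀ o, β o ≠ ⊤ := by
    rintro (_ | k)
    · exact ENNReal.zero_ne_top
    · exact (ENNReal.zpow_lt_top two_ne_zero (by simp) _).ne
  have hle : ∀ o, ∀ x ∈ E o, h x ≤ β o := by
    rintro (_ | k) x hx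
    · exact le_of_eq hx
    · exact hx.2
  have h1 := hX.le_tsum hS hH hδ hE hβ hle
  let J : ℤ → Set ℝ := fun k => Ioc (2 ^ (k - 1)) (2 ^ k)
  let Φ : ℝ → ℝ≥0∞ := fun t => codimH μ {x | x ∈ S ∧ ENNReal.ofReal t < h x}
  have two : ∀ k : ℤ, ENNReal.ofReal (2 ^ k) = 2 ^ k := fun k => by
    rcases k with n | n
    · simp [ENNReal.ofReal_pow]
    · rw [zpow_negSucc, zpow_negSucc, ENNReal.ofReal_inv_of_pos (by positivity)]
      simp [ENNReal.ofReal_pow]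
  have h2 : ∀ k : ℤ, (2 : ℝ≥0∞) ^ (k + 1) * codimH μ (S ∩ E (some k)) ≤ 4 * ∫⁻ t in J k, Φ t := by
    intro k
    have e1 : volume (J k) = (2 : ℝ≥0∞) ^ (k - 1) := by
      rw [Real.volume_Ioc, ← two]
      congr 1
      rw [zpow_sub_one₀ two_ne_zero]; ring
    have e2 : (2 : ℝ≥0∞) ^ (k + 1) = 4 * 2 ^ (k - 1) := by
      rw [← two, ← two, show (4 : ℝ≥0∞) = ENNReal.ofReal 4 by simp, ← ENNReal.ofReal_mul (by norm_num)]
      congr 1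
      rw [zpow_sub_one₀ two_ne_zero, zpow_add_one₀ two_ne_zero]; ring
    rw [e2, mul_assoc, ← e1, mul_comm (volume _), ← setLIntegral_const]
    gcongr 4 * ?_
    refine setLIntegral_mono' measurableSet_Ioc fun t ht => codimH_mono μ ?_
    rintro x ⟨hxS, hx, -⟩
    refine ⟨hxS, lt_of_le_of_lt ?_ hx⟩
    rw [← two]
    exact ENNReal.ofReal_le_ofReal ht.2
  have hdisj : Pairwise (Function.onFun Disjoint J) := by
    have hm : Monotone fun k : ℤ => (2 : ℝ) ^ (k - 1) := fun a b hab =>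
      zpow_le_zpow_right₀ one_le_two (by omega)
    have := hm.pairwise_disjoint_on_Ioc_succ
    simpa [J, Order.succ_eq_add_one] using this
  calc X ≤ _ := h1
    _ = ∑' k : ℤ, (2 : ℝ≥0∞) ^ (k + 1) * codimH μ (S ∩ E (some k)) := by
        refine ((Option.some_injective ℤ).tsum_eq fun o ho => ?_).symm
        rcases o with _ | k
        · simp [β] at ho
        · exact mem_range_self k
    _ ≤ ∑' k : ℤ, 4 * ∫⁻ t in J k, Φ t := ENNReal.tsum_le_tsum h2
    _ = 4 * ∫⁻ t in ⋃ k, J k, Φ t := by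
        rw [ENNReal.tsum_mul_left, lintegral_iUnion (fun _ => measurableSet_Ioc) hdisj]
    _ ≤ 4 * choquetIntegral μ S h := by
        gcongr 4 * ?_
        refine lintegral_mono_set (iUnion_subset fun k t ht => ?_)
        have : (0 : ℝ) < 2 ^ (k - 1) := by positivity
        exact this.trans ht.1

/-- The representative in `(-1/2, 1/2]` of a point of the circle. -/
def circleRep (a : UnitAddCircle) : ℝ := AddCircle.equivIoc 1 (-1 / 2) a

lemma coe_circleRep (a : UnitAddCircle) : (circleRep a : UnitAddCircle) = a :=
  AddCircle.coe_equivIoc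

lemma circleRep_mem (a : UnitAddCircle) : circleRep a ∈ Ioc (-1 / 2 : ℝ) (1 / 2) := by
  have := (AddCircle.equivIoc (1 : ℝ) (-1 / 2) a).2
  norm_num at this ⊢
  exact this

lemma circleRep_coe {t : ℝ} (h : |t| < 1 / 2) : circleRep (t : UnitAddCircle) = t := by
  rw [abs_lt] at h
  exact AddCircle.equivIoc_coe_of_mem ⟨by linarith, by linarith⟩

lemma norm_coe_of_abs_le {t : ℝ} (h : |t| ≤ 1 / 2) : ‖(t : UnitAddCircle)‖ = |t| :=
  (AddCircle.norm_coe_eq_abs_iff 1 one_ne_zero).2 (by simpa using h)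

lemma abs_circleRep (a : UnitAddCircle) : |circleRep a| = ‖a‖ := by
  have h := circleRep_mem a
  rw [← norm_coe_of_abs_le (abs_le.2 ⟨by linarith [h.1], h.2⟩), coe_circleRep]

lemma norm_coe_le_abs (t : ℝ) : ‖(t : UnitAddCircle)‖ ≤ |t| := by
  rw [UnitAddCircle.norm_eq]
  simpa using round_le t 0

lemma circleRep_add {a b : UnitAddCircle} (h : ‖a‖ + ‖b‖ < 1 / 2) :
    circleRep (a + b) = circleRep a + circleRep b := by
  have h1 : ((circleRep a + circleRep b : ℝ) : UnitAddCircle) = a + b := by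
    rw [AddCircle.coe_add, coe_circleRep, coe_circleRep]
  rw [← h1]
  refine circleRep_coe ((abs_add_le _ _).trans_lt ?_)
  rwa [abs_circleRep, abs_circleRep]

lemma eq_of_coe_eq {s t : ℝ} (h : (s : UnitAddCircle) = t) (hst : |s - t| < 1) : s = t := by
  have h1 : ((s - t : ℝ) : UnitAddCircle) = 0 := by rw [AddCircle.coe_sub, h, sub_self]
  obtain ⟨n, hn⟩ := (AddCircle.coe_eq_zero_iff _).1 h1
  have h2 : (n : ℝ) = s - t := by simpa using hn
  rw [← h2] at hst
  have : n = 0 := by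
    have : |n| < 1 := by exact_mod_cast hst
    exact Int.abs_lt_one_iff.1 this
  rw [this] at h2
  simp at h2
  linarith

lemma measurable_circleRep : Measurable circleRep :=
  measurable_subtype_coe.comp (AddCircle.measurableEquivIoc 1 (-1 / 2)).measurable

/-- A profile on the circle: the angle `±(1 - t) / 2`, with the sign of the representative. -/
def circleProfile (a : UnitAddCircle) (t : ℝ) : ℝ :=
  if 0 ≤ circleRep a then (1 - t) / 2 else -((1 - t) / 2)

lemma abs_circleProfile_sub_le {a b : UnitAddCircle} {η s t : ℝ} (hη : η ≤ 1 / 8)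
    (hab : ‖a - b‖ < η) (hs1 : ‖a‖ < η → s = 1) (hs0 : 1 / 4 ≤ ‖a‖ → s = 0)
    (ht1 : ‖b‖ < η → t = 1) (ht0 : 1 / 4 ≤ ‖b‖ → t = 0) :
    |circleRep (a - b) - (circleRep a - circleRep b) +
      (circleProfile a s - circleProfile b t)| ≤ |s - t| := by
  have ha := circleRep_mem a
  have hb := circleRep_mem b
  have hst := abs_nonneg (s - t)
  have hab' : |circleRep (a - b)| < η := by rwa [abs_circleRep]
  rw [← abs_circleRep] at hs1 hs0 ht1 ht0
  obtain ⟨n, hn⟩ : ∃ n : ℤ, circleRep (a - b) = circleRep a - circleRep b + n := by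
    have : ((circleRep (a - b) - (circleRep a - circleRep b) : ℝ) : UnitAddCircle) = 0 := by
      rw [AddCircle.coe_sub, AddCircle.coe_sub, coe_circleRep, coe_circleRep, coe_circleRep,
        sub_self]
    obtain ⟨n, hn⟩ := (AddCircle.coe_eq_zero_iff _).1 this
    exact ⟨n, by simp at hn; linarith⟩
  rw [hn, add_sub_cancel_left]
  rw [hn, abs_lt] at hab'
  have hn1 : n < 2 := by
    have : (n : ℝ) < 2 := by linarith [ha.1, hb.2]
    exact_mod_cast this
  have hn2 : -2 < n := by
    have : (-2 : ℝ) < n := by linarith [ha.2, hb.1]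
    exact_mod_cast this
  obtain ⟨ha1, ha2⟩ := ha
  obtain ⟨hb1, hb2⟩ := hb
  unfold circleProfile
  interval_cases n
  · push_cast at *
    rw [hs0 (by rw [le_abs]; left; linarith), ht0 (by rw [le_abs]; right; linarith),
      if_pos (by linarith), if_neg (by linarith)]
    norm_num
  · push_cast at *
    by_cases h0 : 0 ≤ circleRep a <;> by_cases h1 : 0 ≤ circleRep b
    · rw [if_pos h0, if_pos h1, abs_le]
      rw [abs_sub_comm] at hst ⊢
      constructor <;> linarith [le_abs_self (t - s), neg_abs_le (t - s)]
    · rw [hs1 (by rw [abs_lt]; constructor <;> linarith),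
        ht1 (by rw [abs_lt]; constructor <;> linarith)]
      simp
    · rw [hs1 (by rw [abs_lt]; constructor <;> linarith),
        ht1 (by rw [abs_lt]; constructor <;> linarith)]
      simp
    · rw [if_neg h0, if_neg h1, abs_le]
      constructor <;> linarith [le_abs_self (s - t), neg_abs_le (s - t)]
  · push_cast at *
    rw [hs0 (by rw [le_abs]; right; linarith), ht0 (by rw [le_abs]; left; linarith),
      if_neg (by linarith), if_pos (by linarith)]
    norm_num

lemma exists_separated_net {T : Type*} [MetricSpace T] [CompactSpace T] {ε : ℝ} (hε : 0 < ε) :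
    ∃ s : Finset T, (∀ x, ∃ z ∈ s, dist x z < ε) ∧
      ∀ z ∈ s, ∀ z' ∈ s, z ≠ z' → ε / 2 ≤ dist z z' := by
  let η : ℝ≥0 := ⟨ε / 4, by positivity⟩
  have hη : η ≠ 0 := fun h => by
    have : ε / 4 = 0 := congrArg NNReal.toReal h
    linarith
  have h2η : ((2 * η : ℝ≥0) : ℝ) = ε / 2 := by
    change 2 * (ε / 4) = ε / 2; ring
  obtain ⟨N, -, hNf, hN⟩ := exists_finite_isCover_of_isCompact hη (isCompact_univ (X := T))
  have hp : packingNumber (2 * η) (univ : Set T) ≠ ⊤ := by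
    refine ne_top_of_le_ne_top (Set.encard_ne_top_iff.2 hNf)
      ((packingNumber_two_mul_le_externalCoveringNumber η univ).trans
        hN.externalCoveringNumber_le_encard)
  obtain ⟨C, -, hCf, -, -⟩ := exists_set_encard_eq_packingNumber hp
  have hfin : (maximalSeparatedSet (2 * η) (univ : Set T)).Finite := by
    rw [← Set.encard_ne_top_iff, encard_maximalSeparatedSet hp]; exact hp
  refine ⟨hfin.toFinset, fun x => ?_, fun z hz z' hz' hne => ?_⟩
  · obtain ⟨z, hz, hxz⟩ := isCover_maximalSeparatedSet hp (mem_univ x)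
    refine ⟨z, hfin.mem_toFinset.2 hz, ?_⟩
    have h1 : edist x z ≤ ((2 * η : ℝ≥0) : ℝ≥0∞) := hxz
    rw [edist_nndist, ENNReal.coe_le_coe, ← NNReal.coe_le_coe, h2η, coe_nndist] at h1
    linarith
  · have h1 : ((2 * η : ℝ≥0) : ℝ≥0∞) < edist z z' :=
      isSeparated_maximalSeparatedSet (hfin.mem_toFinset.1 hz) (hfin.mem_toFinset.1 hz') hne
    rw [edist_nndist, ENNReal.coe_lt_coe, ← NNReal.coe_lt_coe, h2η, coe_nndist] at h1
    exact h1.le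

open scoped Classical in
lemma DoublingPoincare.card_le {T : Type*} [MetricSpace T] [MeasurableSpace T] [BorelSpace T]
    {μ : Measure T} {M C : ℝ} {k : ℕ} (h : DoublingPoincare μ M C k) {s : Finset T} {ε : ℝ}
    (hε : 0 < ε) (hs : ∀ z ∈ s, ∀ z' ∈ s, z ≠ z' → ε / 2 ≤ dist z z') (n : ℕ) (x : T) :
    ((s.filter fun z => x ∈ ball z (2 ^ n * ε)).card : ℝ) ≤ M ^ (n + 4) := by
  have := h.finite
  set J := s.filter fun z => x ∈ ball z (2 ^ n * ε) with hJ
  set B := ball x (2 ^ (n + 1) * ε) with hB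
  have h2 : (1 : ℝ) ≤ 2 ^ n := one_le_pow₀ one_le_two
  have h2ε : ε ≤ 2 ^ n * ε := by nlinarith
  have hmem : ∀ z ∈ J, z ∈ s ∧ dist x z < 2 ^ n * ε := fun z hz => by simpa [hJ] using hz
  have h1 : ∑ z ∈ J, μ.real (ball z (ε / 4)) ≤ μ.real B := by
    rw [← measureReal_biUnion_finset]
    · refine measureReal_mono (iUnion₂_subset fun z hz => ball_subset_ball' ?_)
      have := (hmem z hz).2
      rw [dist_comm, pow_succ]
      nlinarith
    · intro z hz z' hz' hne
      refine ball_disjoint_ball ?_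
      have := hs z (hmem z hz).1 z' (hmem z' hz').1 hne
      linarith
    · exact fun _ _ => measurableSet_ball
  have h3 : ∀ z ∈ J, μ.real B ≤ M ^ (n + 4) * μ.real (ball z (ε / 4)) := fun z hz => by
    refine (measureReal_mono (ball_subset_ball' ?_)).trans
      (h.doubling_pow (n + 4) z (by positivity))
    have := (hmem z hz).2
    have e : (2 : ℝ) ^ (n + 4) * (ε / 4) = 4 * (2 ^ n * ε) := by ring
    rw [e, pow_succ]
    nlinarith
  have h4 : J.card * μ.real B ≤ M ^ (n + 4) * μ.real B := by
    calc J.card * μ.real B = ∑ z ∈ J, μ.real B := by simp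
      _ ≤ ∑ z ∈ J, M ^ (n + 4) * μ.real (ball z (ε / 4)) := Finset.sum_le_sum h3
      _ = M ^ (n + 4) * ∑ z ∈ J, μ.real (ball z (ε / 4)) := by rw [Finset.mul_sum]
      _ ≤ _ := by have := h.one_le; gcongr
  exact le_of_mul_le_mul_right h4 (h.pos _ _ (by positivity))

open scoped Classical in
lemma lintegral_sum_indicator_rpow_le {T : Type*} [MetricSpace T] [MeasurableSpace T]
    [BorelSpace T] {μ : Measure T} {s : Finset T} {r N q : ℝ} (hq : 1 ≤ q) (hN0 : 0 ≤ N)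
    (hN : ∀ x, ((s.filter fun z => x ∈ ball z r).card : ℝ) ≤ N) (a : T → ℝ≥0∞) :
    ∫⁻ x, (∑ z ∈ s, (ball z r).indicator (fun _ => a z) x) ^ q ∂μ ≤
      ENNReal.ofReal (N ^ (q - 1)) * ∑ z ∈ s, a z ^ q * μ (ball z r) := by
  have hpt : ∀ x, (∑ z ∈ s, (ball z r).indicator (fun _ => a z) x) ^ q ≤
      ENNReal.ofReal (N ^ (q - 1)) * ∑ z ∈ s, (ball z r).indicator (fun _ => a z ^ q) x := by
    intro x
    simp only [indicator_apply, ← Finset.sum_filter]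
    refine (ENNReal.rpow_sum_le_const_mul_sum_rpow _ _ hq).trans ?_
    gcongr
    rw [← ENNReal.ofReal_rpow_of_nonneg hN0 (by linarith), ← ENNReal.ofReal_natCast]
    exact ENNReal.rpow_le_rpow (ENNReal.ofReal_le_ofReal (hN x)) (by linarith)
  refine (lintegral_mono hpt).trans ?_
  rw [lintegral_const_mul' _ _ ENNReal.ofReal_ne_top, lintegral_finsetSum]
  · simp [lintegral_indicator_const measurableSet_ball]
  · exact fun z _ => measurable_const.indicator measurableSet_ball

lemma exists_cutoff {T ι : Type*} [MetricSpace T] {s : Finset ι} {c : ι → T} {r : ι → ℝ}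
    (hr : ∀ i ∈ s, 0 < r i) :
    ∃ θ : T → ℝ, (∀ i ∈ s, ∀ y ∈ ball (c i) (r i), θ y = 1) ∧
      (∀ y, (∀ i ∈ s, 2 * r i ≤ dist y (c i)) → θ y = 0) ∧
      ∃ ε > 0, ∀ y y', dist y y' < ε → |θ y - θ y'| ≤
        dist y y' * ∑ i ∈ s, (ball (c i) (3 * r i)).indicator (fun _ => (r i)⁻¹) y := by
  let η : ι → T → ℝ := fun i y => max 0 (min 1 (2 - dist y (c i) / r i))
  have hη0 : ∀ i y, 0 ≤ η i y := fun i y => le_max_left _ _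
  have hz : ∀ i ∈ s, ∀ y, 2 * r i ≤ dist y (c i) → η i y = 0 := fun i hi y hy => by
    have : 2 ≤ dist y (c i) / r i := (le_div_iff₀ (hr i hi)).2 hy
    exact max_eq_left ((min_le_right _ _).trans (by linarith))
  have ho : ∀ i ∈ s, ∀ y ∈ ball (c i) (r i), η i y = 1 := fun i hi y hy => by
    have : dist y (c i) / r i < 1 := (div_lt_one (hr i hi)).2 hy
    have h1 : min 1 (2 - dist y (c i) / r i) = 1 := min_eq_left (by linarith)
    simp only [η, h1]
    norm_num
  obtain ⟨ε, hε, hεr⟩ : ∃ ε > 0, ∀ i ∈ s, ε ≤ r i := by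
    rcases s.eq_empty_or_nonempty with rfl | hs
    · exact ⟨1, one_pos, by simp⟩
    · exact ⟨s.inf' hs r, (Finset.lt_inf'_iff hs).2 hr, fun i hi => Finset.inf'_le _ hi⟩
  refine ⟨fun y => min 1 (∑ i ∈ s, η i y), fun i hi y hy => ?_, fun y hy => ?_, ε, hε,
    fun y y' hyy => ?_⟩
  · refine min_eq_left ?_
    rw [← ho i hi y hy]
    exact Finset.single_le_sum (f := fun i => η i y) (fun j _ => hη0 j y) hi
  · beta_reduce
    rw [Finset.sum_eq_zero fun i hi => hz i hi y (hy i hi)]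
    norm_num
  · have h1 : |min 1 (∑ i ∈ s, η i y) - min 1 (∑ i ∈ s, η i y')| ≤
        |∑ i ∈ s, η i y - ∑ i ∈ s, η i y'| := by
      simpa using abs_min_sub_min_le_max 1 (∑ i ∈ s, η i y) 1 (∑ i ∈ s, η i y')
    refine h1.trans ?_
    rw [← Finset.sum_sub_distrib, Finset.mul_sum]
    refine (Finset.abs_sum_le_sum_abs _ _).trans (Finset.sum_le_sum fun i hi => ?_)
    have hri := hr i hi
    by_cases hy : y ∈ ball (c i) (3 * r i)
    · rw [indicator_of_mem hy]
      calc |η i y - η i y'| ≤ |min 1 (2 - dist y (c i) / r i) - min 1 (2 - dist y' (c i) / r i)| := by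
            simpa using abs_max_sub_max_le_max 0 (min 1 (2 - dist y (c i) / r i)) 0
              (min 1 (2 - dist y' (c i) / r i))
        _ ≤ |(2 - dist y (c i) / r i) - (2 - dist y' (c i) / r i)| := by
            simpa using abs_min_sub_min_le_max 1 (2 - dist y (c i) / r i) 1
              (2 - dist y' (c i) / r i)
        _ = |dist y' (c i) - dist y (c i)| * (r i)⁻¹ := by
            rw [show (2 - dist y (c i) / r i) - (2 - dist y' (c i) / r i) =
              (dist y' (c i) - dist y (c i)) * (r i)⁻¹ by ring, abs_mul,
              abs_of_pos (inv_pos.2 hri)]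
        _ ≤ dist y y' * (r i)⁻¹ := by
            gcongr
            rw [dist_comm y y']
            exact abs_dist_sub_le y' y (c i)
    · rw [indicator_of_notMem hy, mul_zero]
      rw [mem_ball, not_lt] at hy
      have h2 := dist_triangle y y' (c i)
      have h3 := hεr i hi
      rw [hz i hi y (by linarith), hz i hi y' (by linarith)]
      simp

lemma exists_test_function {T : Type*} [MetricSpace T] [CompactSpace T]
    {φ f : T → UnitAddCircle} {w : T → ℝ} (hφ : Continuous φ) (hf : Continuous f)
    (hw : Continuous w) (hwφ : ∀ x, (w x : UnitAddCircle) = φ x - f x) :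
    ∃ δ > 0, ∀ {ι : Type} (s : Finset ι) (c : ι → T) (r : ι → ℝ) (y : ι → T),
      (∀ i ∈ s, r i ≤ δ) → φ ⁻¹' {0} ⊆ ⋃ i ∈ s, ball (c i) (r i) →
      (∀ i ∈ s, y i ∈ φ ⁻¹' {0} ∩ ball (c i) (r i)) →
      ∃ v : T → ℝ, Continuous v ∧ ∃ ε > 0, ∀ x x', dist x x' < ε →
        |v x - v x' + circleRep (f x - f x')| ≤ dist x x' *
          ∑ i ∈ s, (ball (c i) (3 * r i)).indicator (fun _ => (r i)⁻¹) x := by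
  have uc := CompactSpace.uniformContinuous_of_continuous hφ
  have ucf := CompactSpace.uniformContinuous_of_continuous hf
  have ucw := CompactSpace.uniformContinuous_of_continuous hw
  rw [Metric.uniformContinuous_iff] at uc ucf ucw
  obtain ⟨δ, hδ, hδφ⟩ := uc (1 / 4) (by norm_num)
  refine ⟨δ / 3, by positivity, fun s c r y hrδ hcov hy => ?_⟩
  have hr : ∀ i ∈ s, 0 < r i := fun i hi => pos_of_mem_ball (hy i hi).2
  obtain ⟨θ, hθ1, hθ0, ε₀, hε₀, hθ⟩ := exists_cutoff (c := c) hr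
  obtain ⟨η', hη', hη'K⟩ : ∃ η > 0, ∀ x ∈ (⋃ i ∈ s, ball (c i) (r i))ᶜ, η ≤ ‖φ x‖ := by
    have hK : IsCompact (⋃ i ∈ s, ball (c i) (r i))ᶜ :=
      (isOpen_biUnion fun _ _ => isOpen_ball).isClosed_compl.isCompact
    exact hK.exists_forall_le' hφ.norm.continuousOn fun x hx =>
      norm_pos_iff.2 fun h0 => hx (hcov h0)
  set η := min η' (1 / 8) with hη
  have hη0 : 0 < η := lt_min hη' (by norm_num)
  have hη1 : η ≤ 1 / 8 := min_le_right _ _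
  have key1 : ∀ x, ‖φ x‖ < η → θ x = 1 := fun x hx => by
    by_contra hne
    have hx' : x ∈ (⋃ i ∈ s, ball (c i) (r i))ᶜ := fun hmem => by
      obtain ⟨i, hi, hxi⟩ := mem_iUnion₂.1 hmem
      exact hne (hθ1 i hi x hxi)
    exact absurd hx (not_lt.2 ((min_le_left _ _).trans (hη'K x hx')))
  have key0 : ∀ x, 1 / 4 ≤ ‖φ x‖ → θ x = 0 := fun x hx => by
    refine hθ0 x fun i hi => ?_
    by_contra! hlt
    have h1 := (hy i hi).2
    have h2 := hrδ i hi
    rw [mem_ball] at h1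
    have h3 := dist_triangle_right x (y i) (c i)
    have h4 := hδφ (a := x) (b := y i) (by linarith)
    rw [(hy i hi).1, dist_zero_right] at h4
    linarith
  obtain ⟨ε₁, hε₁, h₁⟩ := uc η hη0
  obtain ⟨ε₂, hε₂, h₂⟩ := ucf (1 / 8) (by norm_num)
  obtain ⟨ε₃, hε₃, h₃⟩ := ucw (1 / 8) (by norm_num)
  have hloc : ∀ x x', dist x x' < min (min ε₀ ε₁) (min ε₂ ε₃) →
      |(w x - circleRep (φ x) + circleProfile (φ x) (θ x)) -
        (w x' - circleRep (φ x') + circleProfile (φ x') (θ x')) + circleRep (f x - f x')| ≤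
        dist x x' * ∑ i ∈ s, (ball (c i) (3 * r i)).indicator (fun _ => (r i)⁻¹) x := by
    intro x x' hd
    simp only [lt_min_iff] at hd
    obtain ⟨⟨d0, d1⟩, d2, d3⟩ := hd
    have e1 := h₁ d1
    have e2 := h₂ d2
    have e3 := h₃ d3
    rw [dist_eq_norm] at e1 e2
    rw [Real.dist_eq] at e3
    have heq : w x - w x' + circleRep (f x - f x') = circleRep (φ x - φ x') := by
      refine eq_of_coe_eq ?_ ?_
      · rw [AddCircle.coe_add, AddCircle.coe_sub, coe_circleRep, coe_circleRep, hwφ, hwφ]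
        abel
      · rw [← abs_circleRep] at e1 e2
        rw [abs_lt] at *
        constructor <;> linarith
    refine le_trans ?_ (hθ x x' d0)
    refine le_trans (le_of_eq ?_) (abs_circleProfile_sub_le hη1 e1 (key1 x) (key0 x) (key1 x')
      (key0 x'))
    rw [← heq]
    ring_nf
  have hε : 0 < min (min ε₀ ε₁) (min ε₂ ε₃) := by simp [*]
  refine ⟨fun x => w x - circleRep (φ x) + circleProfile (φ x) (θ x), ?_, _, hε, hloc⟩
  rw [continuous_iff_continuousAt]
  intro x
  rw [ContinuousAt, tendsto_iff_dist_tendsto_zero]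
  set v := fun x => w x - circleRep (φ x) + circleProfile (φ x) (θ x) with hv
  set ρ := ∑ i ∈ s, (ball (c i) (3 * r i)).indicator (fun _ => (r i)⁻¹) x
  have hlim : Tendsto (fun x' => dist x x' * ρ + ‖f x - f x'‖) (𝓝 x) (𝓝 0) := by
    have : Continuous fun x' => dist x x' * ρ + ‖f x - f x'‖ := by fun_prop
    simpa using this.tendsto x
  refine squeeze_zero' (Eventually.of_forall fun _ => dist_nonneg) ?_ hlim
  filter_upwards [ball_mem_nhds x hε] with x' hx'
  rw [mem_ball, dist_comm] at hx'
  have h5 := hloc x x' hx'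
  rw [dist_comm, Real.dist_eq, ← abs_circleRep]
  have h6 := abs_sub_abs_le_abs_sub (v x - v x') (-circleRep (f x - f x'))
  rw [abs_neg, sub_neg_eq_add] at h6
  simp only [hv] at h6 ⊢
  linarith

/-- The tent function of radius `2 * ε` around `x`. -/
def tent {T : Type*} [MetricSpace T] (ε : ℝ) (x y : T) : ℝ := max 0 (2 * ε - dist x y)

section tent

variable {T : Type*} [MetricSpace T] {ε : ℝ}

lemma tent_nonneg (x y : T) : 0 ≤ tent ε x y := le_max_left _ _

lemma tent_le (hε : 0 < ε) (x y : T) : tent ε x y ≤ 2 * ε :=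
  max_le (by positivity) (by linarith [dist_nonneg (x := x) (y := y)])

lemma tent_eq_zero {x y : T} (h : 2 * ε ≤ dist x y) : tent ε x y = 0 :=
  max_eq_left (by linarith)

lemma continuous_tent (x : T) : Continuous (tent ε x) := by
  unfold tent; fun_prop

lemma abs_tent_sub_le (x x' y : T) : |tent ε x y - tent ε x' y| ≤ dist x x' := by
  have h1 : |tent ε x y - tent ε x' y| ≤ |(2 * ε - dist x y) - (2 * ε - dist x' y)| := by
    simpa [tent] using abs_max_sub_max_le_max 0 (2 * ε - dist x y) 0 (2 * ε - dist x' y)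
  refine h1.trans ?_
  rw [show (2 * ε - dist x y) - (2 * ε - dist x' y) = dist x' y - dist x y by ring,
    dist_comm x x']
  exact abs_dist_sub_le x' x y

variable [MeasurableSpace T] [BorelSpace T] {μ : Measure T}

lemma integrable_tent_mul (hε : 0 < ε) {u : T → ℝ} (hu : Integrable u μ) (x : T) :
    Integrable (fun y => tent ε x y * u y) μ := by
  refine hu.bdd_mul (c := 2 * ε) (continuous_tent x).measurable.aestronglyMeasurable
    (Eventually.of_forall fun y => ?_)
  rw [Real.norm_eq_abs, abs_of_nonneg (tent_nonneg x y)]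
  exact tent_le hε x y

lemma integrable_tent [IsFiniteMeasure μ] (hε : 0 < ε) (x : T) : Integrable (tent ε x) μ := by
  simpa using integrable_tent_mul hε (integrable_const (1 : ℝ)) x

lemma mul_measureReal_ball_le_integral_tent [IsFiniteMeasure μ] (hε : 0 < ε) (x : T) :
    ε * μ.real (ball x ε) ≤ ∫ y, tent ε x y ∂μ := by
  calc ε * μ.real (ball x ε) = ∫ y in ball x ε, ε ∂μ := by simp [mul_comm]
    _ ≤ ∫ y in ball x ε, tent ε x y ∂μ := by
        refine setIntegral_mono_on (integrable_const _) (integrable_tent hε x).integrableOn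
          measurableSet_ball fun y hy => ?_
        rw [mem_ball, dist_comm] at hy
        exact le_max_of_le_right (by linarith)
    _ ≤ _ := setIntegral_le_integral (integrable_tent hε x)
        (Eventually.of_forall fun y => tent_nonneg x y)

lemma abs_integral_tent_mul_sub_le (hε : 0 < ε) {u : T → ℝ} (hu : Integrable u μ) {x x' z : T}
    (hx : x ∈ ball z (2 * ε)) (hx' : x' ∈ ball z (2 * ε)) :
    |∫ y, tent ε x y * u y ∂μ - ∫ y, tent ε x' y * u y ∂μ| ≤
      dist x x' * ∫ y in ball z (4 * ε), |u y| ∂μ := by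
  rw [← integral_sub (integrable_tent_mul hε hu x) (integrable_tent_mul hε hu x'),
    ← integral_indicator measurableSet_ball, ← integral_const_mul]
  refine (abs_integral_le_integral_abs).trans (integral_mono
    ((integrable_tent_mul hε hu x).sub (integrable_tent_mul hε hu x')).abs
    ((hu.abs.indicator measurableSet_ball).const_mul _) fun y => ?_)
  change |tent ε x y * u y - tent ε x' y * u y| ≤ _
  by_cases hy : y ∈ ball z (4 * ε)
  · rw [indicator_of_mem hy, ← sub_mul, abs_mul]
    exact mul_le_mul_of_nonneg_right (abs_tent_sub_le x x' y) (abs_nonneg _)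
  · rw [mem_ball, not_lt] at hy
    rw [mem_ball] at hx hx'
    have h1 := dist_triangle_left y z x
    have h2 := dist_triangle_left y z x'
    rw [tent_eq_zero (by linarith), tent_eq_zero (by linarith)]
    simp only [zero_mul, sub_zero, abs_zero]
    exact mul_nonneg dist_nonneg (indicator_nonneg (fun _ _ => abs_nonneg _) _)

lemma abs_integral_tent_mul_le (hε : 0 < ε) {u : T → ℝ} (hu : Integrable u μ) {x z : T}
    (hx : x ∈ ball z (2 * ε)) :
    |∫ y, tent ε x y * u y ∂μ| ≤ 2 * ε * ∫ y in ball z (4 * ε), |u y| ∂μ := by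
  rw [← integral_indicator measurableSet_ball, ← integral_const_mul]
  refine (abs_integral_le_integral_abs).trans (integral_mono
    (integrable_tent_mul hε hu x).abs
    ((hu.abs.indicator measurableSet_ball).const_mul _) fun y => ?_)
  change |tent ε x y * u y| ≤ _
  by_cases hy : y ∈ ball z (4 * ε)
  · rw [indicator_of_mem hy, abs_mul, abs_of_nonneg (tent_nonneg x y)]
    exact mul_le_mul_of_nonneg_right (tent_le hε x y) (abs_nonneg _)
  · rw [mem_ball, not_lt] at hy
    rw [mem_ball] at hx
    have h1 := dist_triangle_left y z x
    rw [tent_eq_zero (by linarith)]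
    simp only [zero_mul, abs_zero]
    exact mul_nonneg (by positivity) (indicator_nonneg (fun _ _ => abs_nonneg _) _)

/-- The average of `u` with respect to the tent function around `x`. -/
def tentAverage (μ : Measure T) (ε : ℝ) (u : T → ℝ) (x : T) : ℝ :=
  (∫ y, tent ε x y ∂μ)⁻¹ * ∫ y, tent ε x y * u y ∂μ

lemma DoublingPoincare.abs_tentAverage_sub_le {M C : ℝ} {k : ℕ} (h : DoublingPoincare μ M C k)
    (hε : 0 < ε) {u : T → ℝ} (hu : Integrable u μ) (c : ℝ) {x x' z : T}
    (hx : x ∈ ball z (2 * ε)) (hx' : x' ∈ ball z (2 * ε)) :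
    |tentAverage μ ε u x - tentAverage μ ε u x'| ≤
      3 * M ^ 6 / (ε * μ.real (ball z ε)) * (∫ y in ball z (4 * ε), |u y - c| ∂μ) *
        dist x x' := by
  have := h.finite
  have hM := h.one_le
  have hm := h.pos z ε hε
  have hZlow : ∀ {x}, x ∈ ball z (2 * ε) →
      ε * μ.real (ball z ε) / M ^ 2 ≤ ∫ y, tent ε x y ∂μ := fun {x} hx => by
    refine le_trans ?_ (mul_measureReal_ball_le_integral_tent hε x)
    rw [div_le_iff₀ (by positivity), mul_assoc]
    refine mul_le_mul_of_nonneg_left ?_ hε.le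
    rw [mul_comm]
    refine (measureReal_mono (ball_subset_ball' ?_)).trans (h.doubling_pow 2 x hε)
    rw [mem_ball, dist_comm] at hx
    linarith
  have hc : Integrable (fun y => u y - c) μ := hu.sub (integrable_const c)
  have hav : ∀ {x}, x ∈ ball z (2 * ε) → tentAverage μ ε u x - c =
      (∫ y, tent ε x y * (u y - c) ∂μ) / ∫ y, tent ε x y ∂μ := fun {x} hx => by
    have hZ : 0 < ∫ y, tent ε x y ∂μ := lt_of_lt_of_le (by positivity) (hZlow hx)
    simp only [mul_sub]
    rw [integral_sub (integrable_tent_mul hε hu x) ((integrable_tent hε x).mul_const c),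
      integral_mul_const, tentAverage]
    field_simp
  have hE := abs_integral_tent_mul_sub_le hε hc hx hx'
  have hE' := abs_integral_tent_mul_le hε hc hx'
  have hZZ := abs_integral_tent_mul_sub_le (μ := μ) hε (integrable_const (1 : ℝ)) hx hx'
  have hP : μ.real (ball z (4 * ε)) ≤ M ^ 2 * μ.real (ball z ε) := by
    convert h.doubling_pow 2 z hε using 3
    norm_num
  simp only [mul_one, abs_one, integral_const, smul_eq_mul, measureReal_restrict_apply_univ] at hZZ
  have e : tentAverage μ ε u x - tentAverage μ ε u x' =
      (tentAverage μ ε u x - c) - (tentAverage μ ε u x' - c) := by ring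
  rw [e, hav hx, hav hx']
  have hZ := hZlow hx
  have hZ' := hZlow hx'
  set E := ∫ y, tent ε x y * (u y - c) ∂μ
  set E' := ∫ y, tent ε x' y * (u y - c) ∂μ
  set Z := ∫ y, tent ε x y ∂μ
  set Z' := ∫ y, tent ε x' y ∂μ
  set J := ∫ y in ball z (4 * ε), |u y - c| ∂μ with hJ
  set m := μ.real (ball z ε)
  have hJ0 : 0 ≤ J := integral_nonneg fun _ => abs_nonneg _
  have hq : 0 < ε * m / M ^ 2 := by positivity
  have hZ0 : 0 < Z := hq.trans_le hZ
  have hZ0' : 0 < Z' := hq.trans_le hZ'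
  have hZZ' : |Z - Z'| ≤ dist x x' * (M ^ 2 * m) :=
    hZZ.trans (mul_le_mul_of_nonneg_left hP dist_nonneg)
  calc |E / Z - E' / Z'| = |(E - E') / Z + E' * (Z' - Z) / (Z * Z')| := by
        congr 1; field_simp; ring
    _ ≤ |E - E'| / Z + |E'| * |Z - Z'| / (Z * Z') := by
        refine (abs_add_le _ _).trans ?_
        rw [abs_div, abs_div, abs_mul, abs_of_pos hZ0, abs_of_pos (mul_pos hZ0 hZ0'),
          abs_sub_comm Z']
    _ ≤ dist x x' * J / (ε * m / M ^ 2) +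
        2 * ε * J * (dist x x' * (M ^ 2 * m)) / (ε * m / M ^ 2 * (ε * m / M ^ 2)) := by
        have hd := dist_nonneg (x := x) (y := x')
        gcongr
    _ = (M ^ 2 + 2 * M ^ 6) / (ε * m) * J * dist x x' := by
        field_simp
    _ ≤ 3 * M ^ 6 / (ε * m) * J * dist x x' := by
        have : M ^ 2 ≤ M ^ 6 := pow_le_pow_right₀ hM (by norm_num)
        gcongr
        linarith

end tent

lemma circleRep_sub_add_sub {a b c : UnitAddCircle} (h : ‖a - b‖ + ‖b - c‖ < 1 / 2) :
    circleRep (a - c) = circleRep (a - b) + circleRep (b - c) := by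
  rw [← circleRep_add h, sub_add_sub_cancel]

section

variable {T : Type*} [MetricSpace T] [CompactSpace T] [MeasurableSpace T] [BorelSpace T]
  {μ : Measure T} {M C : ℝ} {k : ℕ} {f : T → UnitAddCircle} {v ρ : T → ℝ} {ε ε' : ℝ}

lemma integrable_add_circleRep [IsFiniteMeasure μ] (hf : Continuous f) (hv : Continuous v)
    (a : UnitAddCircle) : Integrable (fun y => v y + circleRep (f y - a)) μ := by
  refine (hv.integrable_of_hasCompactSupport (HasCompactSupport.of_compactSpace v)).add ?_
  refine Integrable.of_bound (C := 1 / 2)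
    (measurable_circleRep.comp (hf.sub continuous_const).measurable).aestronglyMeasurable
    (Eventually.of_forall fun y => ?_)
  have := circleRep_mem (f y - a)
  exact abs_le.2 ⟨by linarith [this.1], this.2⟩

lemma DoublingPoincare.exists_integral_abs_sub_le (h : DoublingPoincare μ M C k)
    (hf : Continuous f) (hε : 0 < ε)
    (hosc : ∀ x y, dist x y < 2 ^ k * ε → ‖f x - f y‖ < 1 / 8) (hv : Continuous v)
    (hρ0 : ∀ x, 0 ≤ ρ x) (hρm : Measurable ρ) (hρ : Integrable ρ μ) (hε' : 0 < ε')
    (hloc : ∀ x x', dist x x' < ε' →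
      |v x - v x' + circleRep (f x - f x')| ≤ dist x x' * ρ x) (z : T) :
    ∃ c, ∫ y in ball z ε, |v y + circleRep (f y - f z) - c| ∂μ ≤
      C * ε * ∫ y in ball z (2 ^ k * ε), ρ y ∂μ := by
  classical
  have := h.finite
  have hC := h.nonneg
  set U : T → ℝ := fun y => v y + circleRep (f y - f z) with hU
  have hUi : Integrable U μ := integrable_add_circleRep hf hv (f z)
  set R := 2 ^ k * ε with hR
  have hR0 : 0 < R := by positivity
  let A : T → ℝ≥0∞ := (ball z R).piecewise (fun x => ENNReal.ofReal (ρ x)) fun _ => ⊤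
  have hA : Measurable A := Measurable.piecewise measurableSet_ball hρm.ennreal_ofReal
    measurable_const
  have hug : IsUpperGradient U A := by
    refine isUpperGradient_of_local (lt_min hε' hR0) fun x x' hd => ?_
    rw [lt_min_iff] at hd
    by_cases hx : x ∈ ball z R
    · have e : U x - U x' = v x - v x' + circleRep (f x - f x') := by
        have h1 := hosc x z hx
        have h2 := hosc x x' hd.2
        have h3 : ‖f x' - f z‖ ≤ ‖f x - f z‖ + ‖f x - f x'‖ := by
          rw [show f x' - f z = (f x - f z) - (f x - f x') by abel]
          exact norm_sub_le _ _
        have h4 := circleRep_sub_add_sub (a := f x) (b := f x') (c := f z) (by linarith)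
        simp only [hU]
        linarith
      simp only [A, piecewise_eq_of_mem _ _ _ hx]
      rw [edist_dist, edist_dist, Real.dist_eq, e, ← ENNReal.ofReal_mul (hρ0 x), mul_comm (ρ x)]
      exact ENNReal.ofReal_le_ofReal (hloc x x' hd.1)
    · simp only [A, piecewise_eq_of_notMem _ _ _ hx]
      rcases eq_or_ne x x' with rfl | hne
      · simp
      · rw [ENNReal.top_mul (edist_pos.2 hne).ne']
        exact le_top
  obtain ⟨c, hc⟩ := h.poincare U A hUi hA hug z ε hε
  refine ⟨c, ?_⟩
  have e1 : ∫⁻ y in ball z R, A y ∂μ = ENNReal.ofReal (∫ y in ball z R, ρ y ∂μ) := by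
    rw [ofReal_integral_eq_lintegral_ofReal hρ.integrableOn (Eventually.of_forall hρ0)]
    exact setLIntegral_congr_fun measurableSet_ball fun y hy =>
      piecewise_eq_of_mem _ _ _ hy
  have e2 : ∫⁻ y in ball z ε, ENNReal.ofReal |U y - c| ∂μ =
      ENNReal.ofReal (∫ y in ball z ε, |U y - c| ∂μ) :=
    (ofReal_integral_eq_lintegral_ofReal (hUi.sub (integrable_const c)).abs.integrableOn
      (Eventually.of_forall fun _ => abs_nonneg _)).symm
  rw [e1, e2, ← ENNReal.ofReal_mul (by positivity)] at hc
  exact (ENNReal.ofReal_le_ofReal_iff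
    (mul_nonneg (by positivity) (integral_nonneg fun _ => hρ0 _))).1 hc

lemma DoublingPoincare.exists_mollification (h : DoublingPoincare μ M C k)
    (hf : Continuous f) (hε : 0 < ε)
    (hosc : ∀ x y, dist x y < 2 ^ k * (4 * ε) → ‖f x - f y‖ < 1 / 8) (hv : Continuous v)
    (hρ0 : ∀ x, 0 ≤ ρ x) (hρm : Measurable ρ) (hρ : Integrable ρ μ) (hε' : 0 < ε')
    (hloc : ∀ x x', dist x x' < ε' →
      |v x - v x' + circleRep (f x - f x')| ≤ dist x x' * ρ x) :
    ∃ v' : T → ℝ, ∀ z, ∀ x ∈ ball z ε, ∀ x', dist x x' < ε →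
      |v' x - v' x' + circleRep (f x - f x')| ≤
        12 * C * M ^ 6 / μ.real (ball z ε) * (∫ y in ball z (2 ^ k * (4 * ε)), ρ y ∂μ) *
          dist x x' := by
  have := h.finite
  have hM := h.one_le
  refine ⟨fun x => tentAverage μ ε (fun y => v y + circleRep (f y - f x)) x,
    fun z x hx x' hxx' => ?_⟩
  have h2k : (1 : ℝ) ≤ 2 ^ k := one_le_pow₀ one_le_two
  have hle : 4 * ε ≤ 2 ^ k * (4 * ε) := by nlinarith
  have hx2 : x ∈ ball z (2 * ε) := ball_subset_ball (by linarith) hx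
  have hx2' : x' ∈ ball z (2 * ε) := by
    rw [mem_ball] at hx ⊢
    have := dist_triangle_left x' z x
    linarith
  set U : T → ℝ := fun y => v y + circleRep (f y - f z) with hU
  have hUi : Integrable U μ := integrable_add_circleRep hf hv (f z)
  have key : ∀ x ∈ ball z (2 * ε),
      tentAverage μ ε (fun y => v y + circleRep (f y - f x)) x =
        tentAverage μ ε U x - circleRep (f x - f z) := by
    intro x hx
    have hZ : 0 < ∫ y, tent ε x y ∂μ :=
      lt_of_lt_of_le (mul_pos hε (h.pos x ε hε)) (mul_measureReal_ball_le_integral_tent hε x)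
    have e : ∀ y, tent ε x y * (v y + circleRep (f y - f x)) =
        tent ε x y * U y - tent ε x y * circleRep (f x - f z) := by
      intro y
      rcases lt_or_ge (dist x y) (2 * ε) with hy | hy
      · have h1 := hosc y x (by rw [dist_comm]; linarith)
        have h2 := hosc x z (by rw [mem_ball] at hx; linarith)
        have h3 := circleRep_sub_add_sub (a := f y) (b := f x) (c := f z) (by linarith)
        simp only [hU]
        rw [h3]
        ring
      · simp [tent_eq_zero hy]
    simp only [tentAverage, e]
    rw [integral_sub (integrable_tent_mul hε hUi x) ((integrable_tent hε x).mul_const _),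
      integral_mul_const, mul_sub, inv_mul_cancel_left₀ hZ.ne']
  obtain ⟨c, hc⟩ := h.exists_integral_abs_sub_le hf (by positivity) hosc hv hρ0 hρm hρ hε' hloc z
  have h1 := h.abs_tentAverage_sub_le hε hUi c hx2 hx2'
  have hm := h.pos z ε hε
  beta_reduce
  rw [key x hx2, key x' hx2']
  have h3 := circleRep_sub_add_sub (a := f x) (b := f x') (c := f z) (by
    have h4 := hosc x x' (by linarith)
    have h5 := hosc x' z (by rw [mem_ball] at hx2'; linarith)
    linarith)
  rw [show tentAverage μ ε U x - circleRep (f x - f z) -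
    (tentAverage μ ε U x' - circleRep (f x' - f z)) + circleRep (f x - f x') =
      tentAverage μ ε U x - tentAverage μ ε U x' by linarith]
  refine h1.trans ?_
  calc _ ≤ 3 * M ^ 6 / (ε * μ.real (ball z ε)) *
        (C * (4 * ε) * ∫ y in ball z (2 ^ k * (4 * ε)), ρ y ∂μ) * dist x x' := by
        gcongr
    _ = _ := by field_simp; ring

end

lemma IsUpperGradient.isWeakUpperGradient {X : Type*} [PseudoMetricSpace X] [MeasurableSpace X]
    {Y : Type*} [PseudoEMetricSpace Y] {u : X → Y} {ρ : X → ℝ≥0∞} (h : IsUpperGradient u ρ)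
    (μ : Measure X) {p : ℝ} (hp : 0 < p) : IsWeakUpperGradient μ p u ρ := by
  rw [IsWeakUpperGradient, ← nonpos_iff_eq_zero, pathMod]
  refine (iInf₂_le (fun _ => 0) ⟨measurable_const, fun γ hγ => absurd (h γ) hγ⟩).trans ?_
  simp [hp]

lemma cap_le_lintegral {T : Type*} [MetricSpace T] [MeasurableSpace T] {μ : Measure T} {p : ℝ}
    {x₀ : T} {α₀ : Path x₀ x₀} {f : T → UnitAddCircle} {ρ : T → ℝ≥0∞} (hp : 0 < p)
    (hf : DegOneLip x₀ α₀ f) (hρ : Measurable ρ) (h : IsUpperGradient f ρ) :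
    cap μ p x₀ α₀ ≤ ∫⁻ x, ρ x ^ p ∂μ :=
  (iInf₂_le f hf).trans (iInf₂_le ρ ⟨hρ, h.isWeakUpperGradient μ hp⟩)

lemma cap_lt_top {T : Type*} [MetricSpace T] [MeasurableSpace T] {μ : Measure T}
    [IsFiniteMeasure μ] {p : ℝ}
    {x₀ : T} {α₀ : Path x₀ x₀} {f : T → UnitAddCircle} (hp : 0 < p)
    (hf : DegOneLip x₀ α₀ f) : cap μ p x₀ α₀ < ⊤ := by
  obtain ⟨L, hL⟩ := hf.1
  have hug : IsUpperGradient f fun _ => (L : ℝ≥0∞) :=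
    isUpperGradient_of_local one_pos fun x x' _ => hL x x'
  refine (cap_le_lintegral hp hf measurable_const hug).trans_lt ?_
  rw [lintegral_const]
  exact ENNReal.mul_lt_top (ENNReal.rpow_lt_top_of_nonneg hp.le ENNReal.coe_ne_top)
    (measure_lt_top μ _)

open scoped Classical in
lemma cap_le_sum {T : Type*} [MetricSpace T] [MeasurableSpace T] [BorelSpace T] {μ : Measure T}
    [IsFiniteMeasure μ] {p N ε : ℝ}
    {x₀ : T} {α₀ : Path x₀ x₀} {f : T → UnitAddCircle} (hp : 1 ≤ p)
    (hf : DegOneLip x₀ α₀ f) (hε : 0 < ε) {s : Finset T} (hs : ∀ x, ∃ z ∈ s, dist x z < ε)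
    (hN0 : 0 ≤ N) (hN : ∀ x, ((s.filter fun z => x ∈ ball z ε).card : ℝ) ≤ N)
    {a v : T → ℝ} (ha : ∀ z ∈ s, 0 ≤ a z) (hv : ∀ z ∈ s, ∀ x ∈ ball z ε, ∀ x', dist x x' < ε →
      |v x - v x' + circleRep (f x - f x')| ≤ a z * dist x x') :
    cap μ p x₀ α₀ ≤
      ENNReal.ofReal (N ^ (p - 1) * ∑ z ∈ s, μ.real (ball z ε) * a z ^ p) := by
  obtain ⟨hfc, -⟩ := hf.2
  have hnorm : ∀ x x', ‖(f x + (v x : UnitAddCircle)) - (f x' + (v x' : UnitAddCircle))‖ ≤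
      |v x - v x' + circleRep (f x - f x')| := fun x x' => by
    refine le_of_eq_of_le ?_ (norm_coe_le_abs _)
    rw [AddCircle.coe_add, AddCircle.coe_sub, coe_circleRep]
    congr 1
    abel
  set L := ∑ z ∈ s, a z with hL
  have hL0 : 0 ≤ L := Finset.sum_nonneg ha
  have hvL : ∀ x x', dist x x' < ε →
      |v x - v x' + circleRep (f x - f x')| ≤ L * dist x x' := fun x x' hd => by
    obtain ⟨z, hz, hxz⟩ := hs x
    exact (hv z hz x hxz x' hd).trans
      (mul_le_mul_of_nonneg_right (Finset.single_le_sum ha hz) dist_nonneg)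
  have hvc : Continuous v := by
    rw [continuous_iff_continuousAt]
    intro x
    rw [ContinuousAt, tendsto_iff_dist_tendsto_zero]
    have hlim : Tendsto (fun x' => L * dist x x' + ‖f x - f x'‖) (𝓝 x) (𝓝 0) := by
      have : Continuous fun x' => L * dist x x' + ‖f x - f x'‖ := by fun_prop
      simpa using this.tendsto x
    refine squeeze_zero' (Eventually.of_forall fun _ => dist_nonneg) ?_ hlim
    filter_upwards [ball_mem_nhds x hε] with x' hx'
    rw [mem_ball, dist_comm] at hx'
    have h5 := hvL x x' hx'
    rw [dist_comm, Real.dist_eq, ← abs_circleRep]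
    have h6 := abs_sub_abs_le_abs_sub (v x - v x') (-circleRep (f x - f x'))
    rw [abs_neg, sub_neg_eq_add] at h6
    linarith
  have hlip : LipschitzWith (L + 1 / ε).toNNReal fun x => f x + (v x : UnitAddCircle) := by
    refine LipschitzWith.of_dist_le_mul fun x x' => ?_
    rw [Real.coe_toNNReal _ (by positivity), dist_eq_norm]
    rcases lt_or_ge (dist x x') ε with hd | hd
    · refine (hnorm x x').trans ((hvL x x' hd).trans ?_)
      gcongr
      have : 0 < 1 / ε := by positivity
      linarith
    · have h1 : 1 ≤ 1 / ε * dist x x' := by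
        rw [one_div, inv_mul_eq_div, one_le_div hε]
        exact hd
      have h2 := AddCircle.norm_le_half_period (1 : ℝ) one_ne_zero
        (x := (f x + (v x : UnitAddCircle)) - (f x' + (v x' : UnitAddCircle)))
      rw [abs_one] at h2
      have h3 : 0 ≤ L * dist x x' := by positivity
      linarith
  have hdeg : DegOneLip x₀ α₀ fun x => f x + (v x : UnitAddCircle) :=
    ⟨⟨_, hlip⟩, hf.2.add_coe hvc⟩
  let A : T → ℝ≥0∞ := fun x =>
    ∑ z ∈ s, (ball z ε).indicator (fun _ => ENNReal.ofReal (a z)) x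
  have hA : Measurable A :=
    Finset.measurable_fun_sum _ fun z _ => measurable_const.indicator measurableSet_ball
  have hug : IsUpperGradient (fun x => f x + (v x : UnitAddCircle)) A := by
    refine isUpperGradient_of_local hε fun x x' hd => ?_
    obtain ⟨z, hz, hxz⟩ := hs x
    have h1 : ENNReal.ofReal (a z) ≤ A x := by
      have := Finset.single_le_sum
        (f := fun z => (ball z ε).indicator (fun _ => ENNReal.ofReal (a z)) x)
        (fun _ _ => zero_le) hz
      simpa [indicator_of_mem (show x ∈ ball z ε from hxz)] using this
    refine le_trans ?_ (mul_le_mul_left h1 _)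
    rw [edist_dist, edist_dist, dist_eq_norm, ← ENNReal.ofReal_mul (ha z hz)]
    exact ENNReal.ofReal_le_ofReal ((hnorm x x').trans (hv z hz x hxz x' hd))
  refine (cap_le_lintegral (by linarith) hdeg hA hug).trans
    ((lintegral_sum_indicator_rpow_le hp hN0 hN _).trans (le_of_eq ?_))
  rw [ENNReal.ofReal_mul (by positivity), ENNReal.ofReal_sum_of_nonneg fun z hz =>
    mul_nonneg measureReal_nonneg (Real.rpow_nonneg (ha z hz) _)]
  congr 1
  refine Finset.sum_congr rfl fun z hz => ?_
  rw [ENNReal.ofReal_mul measureReal_nonneg, ofReal_measureReal,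
    ENNReal.ofReal_rpow_of_nonneg (ha z hz) (by linarith), mul_comm]

/-- The weights `a` for which some competing function oscillates on each `ε`-ball around a point
`z` of the net by at most `a z` times the distance. -/
def competitorWeights {T : Type*} [MetricSpace T] (f : T → UnitAddCircle) (ε : ℝ)
    (s : Finset T) : Set (s → ℝ) :=
  {a | (∀ z, 0 ≤ a z) ∧ ∃ v : T → ℝ, ∀ z : s, ∀ x ∈ ball (z : T) ε, ∀ x', dist x x' < ε →
    |v x - v x' + circleRep (f x - f x')| ≤ a z * dist x x'}

lemma convex_competitorWeights {T : Type*} [MetricSpace T] (f : T → UnitAddCircle) (ε : ℝ)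
    (s : Finset T) : Convex ℝ (competitorWeights f ε s) := by
  rintro a ⟨ha, v, hv⟩ a' ⟨ha', v', hv'⟩ t t' ht ht' htt
  refine ⟨fun z => ?_, fun x => t * v x + t' * v' x, fun z x hx x' hd => ?_⟩
  · simp only [Pi.add_apply, Pi.smul_apply, smul_eq_mul]
    have := ha z
    have := ha' z
    positivity
  · have e : t * v x + t' * v' x - (t * v x' + t' * v' x') + circleRep (f x - f x') =
        t * (v x - v x' + circleRep (f x - f x')) +
          t' * (v' x - v' x' + circleRep (f x - f x')) := by
      linear_combination (-circleRep (f x - f x')) * htt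
    simp only [Pi.add_apply, Pi.smul_apply, smul_eq_mul]
    rw [e]
    refine (abs_add_le _ _).trans ?_
    rw [abs_mul, abs_mul, abs_of_nonneg ht, abs_of_nonneg ht', add_mul, mul_assoc, mul_assoc]
    exact add_le_add (mul_le_mul_of_nonneg_left (hv z x hx x' hd) ht)
      (mul_le_mul_of_nonneg_left (hv' z x hx x' hd) ht')

lemma DoublingPoincare.setIntegral_sum_indicator_le {T ι : Type*} [MetricSpace T]
    [MeasurableSpace T]
    [BorelSpace T] {μ : Measure T} {M C R : ℝ} {k : ℕ} (h : DoublingPoincare μ M C k)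
    (s : Finset ι) {c y : ι → T} {r : ι → ℝ} (hr : ∀ i ∈ s, r i ≤ R / 4)
    (hy : ∀ i ∈ s, y i ∈ ball (c i) (r i)) (z : T) :
    ∫ x in ball z R, ∑ i ∈ s, (ball (c i) (3 * r i)).indicator (fun _ => (r i)⁻¹) x ∂μ ≤
      M ^ 2 * ∑ i ∈ s, μ.real (ball (c i) (r i)) / r i *
        (ball z (2 * R)).indicator (fun _ => 1) (y i) := by
  have := h.finite
  have hM := h.one_le
  rw [integral_finsetSum _ fun i _ =>
    (integrable_const _).indicator measurableSet_ball, Finset.mul_sum]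
  refine Finset.sum_le_sum fun i hi => ?_
  have hri : 0 < r i := pos_of_mem_ball (hy i hi)
  rw [integral_indicator measurableSet_ball, integral_const, smul_eq_mul,
    measureReal_restrict_apply_univ, measureReal_restrict_apply measurableSet_ball]
  rcases (ball (c i) (3 * r i) ∩ ball z R).eq_empty_or_nonempty with he | ⟨x, hx, hxz⟩
  · rw [he, measureReal_empty, zero_mul]
    have : 0 ≤ (ball z (2 * R)).indicator (fun _ => (1 : ℝ)) (y i) :=
      indicator_nonneg (fun _ _ => zero_le_one) _
    positivity
  · have hyz : y i ∈ ball z (2 * R) := by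
      have h1 := hy i hi
      have h2 := hr i hi
      rw [mem_ball] at hx hxz h1 ⊢
      have h3 := dist_triangle_right (y i) x (c i)
      have h4 := dist_triangle (y i) x z
      linarith
    rw [indicator_of_mem hyz, mul_one, ← mul_div_assoc, ← div_eq_mul_inv]
    refine div_le_div_of_nonneg_right ?_ hri.le
    refine le_trans (measureReal_mono (inter_subset_left.trans (ball_subset_ball ?_)))
      (h.doubling_pow 2 (c i) hri)
    linarith

section

variable {T : Type} [MetricSpace T] [MeasurableSpace T] [BorelSpace T] [CompactSpace T]
  {μ : Measure T} {x₀ : T} {α₀ : Path x₀ x₀} {M C : ℝ} {k : ℕ}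

lemma DoublingPoincare.leRiemannSums (h : DoublingPoincare μ M C k)
    (hα : IsGenerator x₀ α₀) {f φ : T → UnitAddCircle} (hf : HasDegree x₀ α₀ f 1)
    (hφ : HasDegree x₀ α₀ φ 1) {ε : ℝ} (hε : 0 < ε)
    (hosc : ∀ x y, dist x y < 2 ^ k * (4 * ε) → ‖f x - f y‖ < 1 / 8) {s : Finset T} {b : T → ℝ}
    (hb0 : ∀ z ∈ s, 0 ≤ b z)
    (hb : ∀ a ∈ competitorWeights f ε s, 1 ≤ ∑ z : s, μ.real (ball (z : T) ε) * b z * a z) :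
    ∃ δ > 0, LeRiemannSums μ (φ ⁻¹' {0}) (fun x => ∑ z ∈ s,
      (ball z (2 * (2 ^ k * (4 * ε)))).indicator
        (fun _ => ENNReal.ofReal (48 * C * M ^ 8 * b z)) x) 4 δ := by
  classical
  have := h.finite
  have hM := h.one_le
  have hC := h.nonneg
  have : Nonempty T := ⟨x₀⟩
  have := h.pathConnectedSpace
  have := h.locallyPathConnectedSpace
  obtain ⟨w, hw, hwφ⟩ := exists_lift_sub hα hφ hf
  obtain ⟨hfc, -⟩ := id hf
  obtain ⟨hφc, -⟩ := id hφ
  obtain ⟨δ, hδ, H⟩ := exists_test_function hφc hfc hw hwφ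
  set R := 2 ^ k * (4 * ε) with hR
  have hR0 : 0 < R := by positivity
  refine ⟨min δ (R / 4), by positivity, fun ι t c r y hr hcov hy => ?_⟩
  obtain ⟨v, hv, ε', hε', hloc⟩ :=
    H t c r y (fun i hi => (hr i hi).trans (min_le_left _ _)) hcov hy
  have hr0 : ∀ i ∈ t, 0 < r i := fun i hi => pos_of_mem_ball (hy i hi).2
  set ρ : T → ℝ := fun x => ∑ i ∈ t, (ball (c i) (3 * r i)).indicator (fun _ => (r i)⁻¹) x
    with hρ
  have hρ0 : ∀ x, 0 ≤ ρ x := fun x => Finset.sum_nonneg fun i hi =>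
    indicator_nonneg (fun _ _ => (inv_pos.2 (hr0 i hi)).le) _
  have hρm : Measurable ρ :=
    Finset.measurable_fun_sum _ fun i _ => measurable_const.indicator measurableSet_ball
  have hρi : Integrable ρ μ := integrable_finsetSum _ fun i _ =>
    (integrable_const _).indicator measurableSet_ball
  obtain ⟨v', hv'⟩ := h.exists_mollification hfc hε hosc hv hρ0 hρm hρi hε' hloc
  have h1 := hb (fun z => 12 * C * M ^ 6 / μ.real (ball (z : T) ε) *
      (∫ y in ball (z : T) R, ρ y ∂μ))
    ⟨fun z => mul_nonneg (by positivity) (integral_nonneg hρ0), v',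
      fun z x hx x' hd => hv' z x hx x' hd⟩
  rw [Finset.sum_coe_sort s fun z => μ.real (ball z ε) * b z *
    (12 * C * M ^ 6 / μ.real (ball z ε) * ∫ y in ball z R, ρ y ∂μ)] at h1
  have h2 : (4 : ℝ) ≤ ∑ i ∈ t, μ.real (ball (c i) (r i)) / r i *
      ∑ z ∈ s, (ball z (2 * R)).indicator (fun _ => 48 * C * M ^ 8 * b z) (y i) := by
    calc (4 : ℝ) ≤ 4 * ∑ z ∈ s, μ.real (ball z ε) * b z *
          (12 * C * M ^ 6 / μ.real (ball z ε) * ∫ y in ball z R, ρ y ∂μ) := by linarith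
      _ = ∑ z ∈ s, 48 * C * M ^ 6 * b z * ∫ y in ball z R, ρ y ∂μ := by
          rw [Finset.mul_sum]
          refine Finset.sum_congr rfl fun z _ => ?_
          have := (h.pos z ε hε).ne'
          field_simp
          ring
      _ ≤ ∑ z ∈ s, 48 * C * M ^ 6 * b z * (M ^ 2 * ∑ i ∈ t, μ.real (ball (c i) (r i)) / r i *
            (ball z (2 * R)).indicator (fun _ => 1) (y i)) := by
          refine Finset.sum_le_sum fun z hz => mul_le_mul_of_nonneg_left ?_ ?_
          · exact h.setIntegral_sum_indicator_le t
              (fun i hi => (hr i hi).trans (min_le_right _ _)) (fun i hi => (hy i hi).2) z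
          · have := hb0 z hz
            positivity
      _ = _ := by
          simp only [Finset.mul_sum]
          rw [Finset.sum_comm]
          refine Finset.sum_congr rfl fun i _ => Finset.sum_congr rfl fun z _ => ?_
          simp only [indicator_apply]
          split_ifs <;> ring
  have hCb : ∀ z ∈ s, 0 ≤ 48 * C * M ^ 8 * b z := fun z hz => by
    have := hb0 z hz
    positivity
  calc (4 : ℝ≥0∞) = ENNReal.ofReal 4 := by simp
    _ ≤ ENNReal.ofReal (∑ i ∈ t, μ.real (ball (c i) (r i)) / r i *
      ∑ z ∈ s, (ball z (2 * R)).indicator (fun _ => 48 * C * M ^ 8 * b z) (y i)) :=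
        ENNReal.ofReal_le_ofReal h2
    _ = _ := by
        rw [ENNReal.ofReal_sum_of_nonneg fun i hi => mul_nonneg
          (div_nonneg measureReal_nonneg (hr0 i hi).le) (Finset.sum_nonneg fun z hz =>
            indicator_nonneg (fun _ _ => hCb z hz) _)]
        refine Finset.sum_congr rfl fun i hi => ?_
        rw [ENNReal.ofReal_mul (div_nonneg measureReal_nonneg (hr0 i hi).le),
          ENNReal.ofReal_div_of_pos (hr0 i hi), ofReal_measureReal,
          ENNReal.ofReal_sum_of_nonneg fun z hz => indicator_nonneg (fun _ _ => hCb z hz) _]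
        congr 1
        refine Finset.sum_congr rfl fun z _ => ?_
        simp only [indicator_apply]
        split_ifs <;> simp

open scoped Classical in
lemma DoublingPoincare.surfMod_le_sum (h : DoublingPoincare μ M C k)
    (hα : IsGenerator x₀ α₀) {f : T → UnitAddCircle} (hf : HasDegree x₀ α₀ f 1) {ε : ℝ}
    (hε : 0 < ε)
    (hosc : ∀ x y, dist x y < 2 ^ k * (4 * ε) → ‖f x - f y‖ < 1 / 8) {s : Finset T} {b : T → ℝ}
    {N q : ℝ} (hq : 1 ≤ q) (hN0 : 0 ≤ N)
    (hN : ∀ x, ((s.filter fun z => x ∈ ball z (2 ^ (k + 3) * ε)).card : ℝ) ≤ N)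
    (hb0 : ∀ z ∈ s, 0 ≤ b z)
    (hb : ∀ a ∈ competitorWeights f ε s, 1 ≤ ∑ z : s, μ.real (ball (z : T) ε) * b z * a z) :
    surfMod μ q x₀ α₀ ≤ ENNReal.ofReal (N ^ (q - 1) * ((48 * C * M ^ 8) ^ q * M ^ (k + 3)) *
      ∑ z ∈ s, μ.real (ball z ε) * b z ^ q) := by
  have := h.finite
  have hM := h.one_le
  have hC := h.nonneg
  have hCb : ∀ z ∈ s, 0 ≤ 48 * C * M ^ 8 * b z := fun z hz => by
    have := hb0 z hz
    positivity
  have eR : 2 * (2 ^ k * (4 * ε)) = 2 ^ (k + 3) * ε := by ring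
  set g : T → ℝ≥0∞ := fun x => ∑ z ∈ s, (ball z (2 * (2 ^ k * (4 * ε)))).indicator
    (fun _ => ENNReal.ofReal (48 * C * M ^ 8 * b z)) x with hg
  have hgm : Measurable g :=
    Finset.measurable_fun_sum _ fun z _ => measurable_const.indicator measurableSet_ball
  have hga : ∀ S ∈ Surfaces μ x₀ α₀, 1 ≤ choquetIntegral μ S g := by
    rintro S ⟨φ, hφ, rfl, hS⟩
    obtain ⟨δ, hδ, hX⟩ := h.leRiemannSums hα hf hφ hε hosc hb0 hb
    obtain ⟨hφc, -⟩ := id hφ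
    have h4 := hX.le_choquetIntegral (isClosed_singleton.preimage hφc).isCompact hS
      (fun x => ENNReal.sum_ne_top.2 fun z _ => by
        rw [indicator_apply]; split_ifs <;> simp) hδ
    by_contra! hlt
    have h5 : 4 * choquetIntegral μ (φ ⁻¹' {0}) g < 4 * 1 :=
      ENNReal.mul_lt_mul_right (by simp) (by simp) hlt
    rw [mul_one] at h5
    exact absurd h4 (not_le.2 h5)
  refine (iInf₂_le g ⟨hgm, hga⟩).trans ?_
  simp only [hg, eR]
  refine (lintegral_sum_indicator_rpow_le hq hN0 hN _).trans ?_
  rw [mul_assoc (N ^ (q - 1)), ENNReal.ofReal_mul (by positivity)]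
  gcongr
  rw [Finset.mul_sum, ENNReal.ofReal_sum_of_nonneg fun z hz => by
    have := hb0 z hz
    positivity]
  refine Finset.sum_le_sum fun z hz => ?_
  rw [ENNReal.ofReal_rpow_of_nonneg (hCb z hz) (by linarith), ← ofReal_measureReal,
    ← ENNReal.ofReal_mul (Real.rpow_nonneg (hCb z hz) _)]
  apply ENNReal.ofReal_le_ofReal
  have hz0 := hb0 z hz
  calc (48 * C * M ^ 8 * b z) ^ q * μ.real (ball z (2 ^ (k + 3) * ε))
      ≤ (48 * C * M ^ 8) ^ q * b z ^ q * (M ^ (k + 3) * μ.real (ball z ε)) := by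
        rw [Real.mul_rpow (by positivity) hz0]
        gcongr
        exact h.doubling_pow (k + 3) z hε
    _ = _ := by ring

end

section

variable {T : Type} [MetricSpace T] [MeasurableSpace T] [BorelSpace T] [CompactSpace T]
  {μ : Measure T} {x₀ : T} {α₀ : Path x₀ x₀} {M C : ℝ} {k : ℕ}

lemma DoublingPoincare.surfMod_le (h : DoublingPoincare μ M C k)
    (hα : IsGenerator x₀ α₀) {f : T → UnitAddCircle} (hf : DegOneLip x₀ α₀ f) {p : ℝ}
    (hp : 1 < p) (hcap : cap μ p x₀ α₀ ≠ 0) :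
    surfMod μ (p / (p - 1)) x₀ α₀ ≤
      ENNReal.ofReal ((M ^ (k + 7) * (48 * C * M ^ 8)) ^ (p / (p - 1)) * M ^ (k + 3) *
        (cap μ p x₀ α₀).toReal ^ (1 - p / (p - 1))) := by
  classical
  have := h.finite
  have hM := h.one_le
  have hC := h.nonneg
  have hp1 : 0 < p - 1 := by linarith
  have hfc : Continuous f := hf.1.choose_spec.continuous
  have hcapt : cap μ p x₀ α₀ ≠ ⊤ := (cap_lt_top (by linarith) hf).ne
  have hc0 : 0 < (cap μ p x₀ α₀).toReal := ENNReal.toReal_pos hcap hcapt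
  set c := (cap μ p x₀ α₀).toReal with hc
  set q := p / (p - 1) with hq
  have hq1 : 1 ≤ q := by rw [hq, one_le_div hp1]; linarith
  set N := M ^ (k + 7) with hN
  have hN1 : 1 ≤ N := one_le_pow₀ hM
  have hN0 : 0 < N := by linarith
  obtain ⟨r, hr, hosc⟩ := Metric.uniformContinuous_iff.1
    (CompactSpace.uniformContinuous_of_continuous hfc) (1 / 8) (by norm_num)
  obtain ⟨ε, hε, hεr⟩ : ∃ ε > 0, 2 ^ k * (4 * ε) = r :=
    ⟨r / (4 * 2 ^ k), by positivity, by field_simp⟩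
  obtain ⟨s, hs, hsep⟩ := exists_separated_net (T := T) hε
  have hcard : ∀ x, ((s.filter fun z => x ∈ ball z (2 ^ (k + 3) * ε)).card : ℝ) ≤ N :=
    fun x => h.card_le hε hsep (k + 3) x
  have hcard' : ∀ x, ((s.filter fun z => x ∈ ball z ε).card : ℝ) ≤ N := fun x => by
    refine le_trans ?_ (hcard x)
    have h1 : (1 : ℝ) ≤ 2 ^ (k + 3) := one_le_pow₀ one_le_two
    refine Nat.cast_le.2 (Finset.card_le_card (Finset.monotone_filter_right s fun z _ hz => ?_))
    exact ball_subset_ball (by nlinarith) hz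
  have hext : ∀ (a : s → ℝ) (z : s), Function.extend Subtype.val a 0 (z : T) = a z :=
    fun a z => Subtype.val_injective.extend_apply a 0 z
  have hle : ∀ a ∈ competitorWeights f ε s,
      c / N ^ (p - 1) ≤ ∑ z : s, μ.real (ball (z : T) ε) * a z ^ p := by
    rintro a ⟨ha, v, hv⟩
    have h1 := cap_le_sum (μ := μ) hp.le hf hε hs hN0.le hcard'
      (a := Function.extend Subtype.val a 0) (v := v)
      (fun z hz => by rw [hext a ⟨z, hz⟩]; exact ha _)
      (fun z hz x hx x' hd => by rw [hext a ⟨z, hz⟩]; exact hv ⟨z, hz⟩ x hx x' hd)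
    rw [← Finset.sum_coe_sort s fun z => μ.real (ball z ε) *
      Function.extend Subtype.val a 0 z ^ p] at h1
    simp only [hext] at h1
    rw [div_le_iff₀ (by positivity), mul_comm]
    exact ENNReal.toReal_le_of_le_ofReal (mul_nonneg (by positivity)
      (Finset.sum_nonneg fun z _ => mul_nonneg measureReal_nonneg
        (Real.rpow_nonneg (ha z) _))) h1
  obtain ⟨b, hb0, hb1, hbq⟩ := exists_dual_weights (m := fun z : s => μ.real (ball (z : T) ε))
    (fun z => h.pos _ _ hε) hp (div_pos hc0 (by positivity)) (convex_competitorWeights f ε s)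
    (fun a ha => ha.1) hle
  have h2 := h.surfMod_le_sum hα hf.2 hε (fun x y hd => by
      rw [← dist_eq_norm]; exact hosc (by rwa [← hεr])) hq1 hN0.le hcard
    (b := Function.extend Subtype.val b 0)
    (fun z hz => by rw [hext b ⟨z, hz⟩]; exact hb0 _)
    (fun a ha => by simpa only [hext] using hb1 a ha)
  refine h2.trans (ENNReal.ofReal_le_ofReal ?_)
  rw [← Finset.sum_coe_sort s fun z => μ.real (ball z ε) *
      Function.extend Subtype.val b 0 z ^ q]
  simp only [hext]
  have e : (c / N ^ (p - 1)) ^ (1 - q) = N * c ^ (1 - q) := by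
    rw [Real.div_rpow hc0.le (by positivity), ← Real.rpow_mul hN0.le,
      show (p - 1) * (1 - q) = -1 by rw [hq]; field_simp; ring, Real.rpow_neg_one, div_inv_eq_mul,
      mul_comm]
  calc _ ≤ N ^ (q - 1) * ((48 * C * M ^ 8) ^ q * M ^ (k + 3)) * (N * c ^ (1 - q)) := by
        rw [← e]
        gcongr
    _ = (N ^ (q - 1) * N) * (48 * C * M ^ 8) ^ q * M ^ (k + 3) * c ^ (1 - q) := by ring
    _ = _ := by
        rw [← Real.rpow_add_one hN0.ne', sub_add_cancel, Real.mul_rpow hN0.le (by positivity)]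

lemma DoublingPoincare.cap_rpow_mul_surfMod_rpow_le (h : DoublingPoincare μ M C k)
    (hα : IsGenerator x₀ α₀) {f : T → UnitAddCircle} (hf : DegOneLip x₀ α₀ f) {p : ℝ}
    (hp : 1 < p) (hcap : cap μ p x₀ α₀ ≠ 0) :
    cap μ p x₀ α₀ ^ (1 / p) * surfMod μ (p / (p - 1)) x₀ α₀ ^ (1 / (p / (p - 1))) ≤
      ENNReal.ofReal (M ^ (k + 7) * (48 * C * M ^ 8) * M ^ (k + 3)) := by
  have := h.finite
  have hM := h.one_le
  have hC := h.nonneg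
  have hp1 : 0 < p - 1 := by linarith
  have hp0 : 0 < p := by linarith
  have hcapt : cap μ p x₀ α₀ ≠ ⊤ := (cap_lt_top hp0 hf).ne
  have hc0 : 0 < (cap μ p x₀ α₀).toReal := ENNReal.toReal_pos hcap hcapt
  have h1 := h.surfMod_le hα hf hp hcap
  rw [← ENNReal.ofReal_toReal hcapt]
  set c := (cap μ p x₀ α₀).toReal with hc
  set q := p / (p - 1) with hq
  have hq0 : 0 < q := by positivity
  have hq1 : 1 ≤ q := by rw [hq, one_le_div hp1]; linarith
  set D := M ^ (k + 7) * (48 * C * M ^ 8) with hD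
  have hD0 : 0 ≤ D := by positivity
  have h2 := ENNReal.rpow_le_rpow h1 (show 0 ≤ 1 / q by positivity)
  refine (mul_le_mul_right h2 _).trans ?_
  rw [ENNReal.ofReal_rpow_of_nonneg hc0.le (by positivity),
    ENNReal.ofReal_rpow_of_nonneg (by positivity) (by positivity),
    ← ENNReal.ofReal_mul (by positivity)]
  apply ENNReal.ofReal_le_ofReal
  rw [Real.mul_rpow (by positivity) (by positivity), Real.mul_rpow (by positivity) (by positivity),
    ← Real.rpow_mul hD0, ← Real.rpow_mul hc0.le, mul_one_div_cancel hq0.ne', Real.rpow_one,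
    show (1 - q) * (1 / q) = -(1 / p) by rw [hq]; field_simp; ring, Real.rpow_neg hc0.le]
  have h3 : (M ^ (k + 3)) ^ (1 / q) ≤ M ^ (k + 3) :=
    Real.rpow_le_self_of_one_le (one_le_pow₀ hM) ((div_le_one hq0).2 hq1)
  have h4 : c ^ (1 / p) ≠ 0 := (Real.rpow_pos_of_pos hc0 _).ne'
  calc _ = D * (M ^ (k + 3)) ^ (1 / q) := by field_simp
    _ ≤ _ := by gcongr

end

end Duality

open Duality in
/-- **Theorem 2.3 (upper bound).** -/
theorem statement2 (Cμ : ℝ≥0∞) (CP lP : ℝ) :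
    ∃ C : ℝ≥0∞, 0 < C ∧ C < ⊤ ∧
      ∀ (T : Type) [MetricSpace T] [MeasurableSpace T] [BorelSpace T] [CompactSpace T]
        (μ : Measure T) (x₀ : T) (α₀ : Path x₀ x₀),
        Standing μ Cμ CP lP x₀ α₀ →
        ∀ p : ℝ, 1 < p →
          (surfMod μ (p / (p - 1)) x₀ α₀ < ⊤ →
            cap μ p x₀ α₀ ^ (1 / p) *
                surfMod μ (p / (p - 1)) x₀ α₀ ^ (1 / (p / (p - 1))) ≤ C) ∧
          (surfMod μ (p / (p - 1)) x₀ α₀ = ⊤ → cap μ p x₀ α₀ = 0) := by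
  obtain ⟨M, C, k, H⟩ := exists_doublingPoincare Cμ CP lP
  refine ⟨ENNReal.ofReal (M ^ (k + 7) * (48 * C * M ^ 8) * M ^ (k + 3)) + 1, by simp,
    ENNReal.add_lt_top.2 ⟨ENNReal.ofReal_lt_top, ENNReal.one_lt_top⟩, ?_⟩
  intro T _ _ _ _ μ x₀ α₀ hS p hp
  have h := H T μ x₀ α₀ hS
  obtain ⟨-, -, -, hα, f, hf⟩ := hS
  have hp1 : 0 < p - 1 := by linarith
  have hp0 : 0 < p := by linarith
  refine ⟨fun hfin => ?_, fun htop => ?_⟩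
  · by_cases hcap : cap μ p x₀ α₀ = 0
    · rw [hcap, ENNReal.zero_rpow_of_pos (by positivity), zero_mul]
      exact zero_le
    · exact (h.cap_rpow_mul_surfMod_rpow_le hα hf hp hcap).trans le_self_add
  · by_contra hcap
    have h1 := h.surfMod_le hα hf hp hcap
    rw [htop, top_le_iff] at h1
    exact ENNReal.ofReal_ne_top h1
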